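/- arXiv:1408.2559 — 3 statements merged into one kernel-verified Lean document; each statement's English description precedes it below -/
import Mathlib

section
/- For every ε > 0 there exists n₀ such that for all n ≥ n₀, every integer k with 3 ≤ k ≤ n/4, and every p with p₀(n,k) ≤ p ≤ 1, where p₀(n,k) = 9·n·log(ne/k)·binom(2k,k)·binom(n,k)/binom(n−k,k)², with probability at least 1 − ε every intersecting subhypergraph of ℋ^k(n,p) of maximum size is trivial. -/
/-- A hypergraph is intersecting if any two of its edges have nonempty intersection. -/
def IsIntersectingHyp (n : ℕ) (H : Finset (Finset (Fin n))) : Prop :=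
  ∀ e ∈ H, ∀ f ∈ H, (e ∩ f).Nonempty

/-- An intersecting hypergraph is trivial if some fixed vertex is contained in all
of its edges. -/
def IsTrivialIntHyp (n : ℕ) (H : Finset (Finset (Fin n))) : Prop :=
  ∃ v : Fin n, ∀ e ∈ H, v ∈ e

-- `randomSubsetProb ground p P` is the probability that the `p`-random subset of
-- `ground` (each element kept independently with probability `p`) satisfies `P`.
open Classical in
noncomputable def randomSubsetProb {α : Type*} (ground : Finset α) (p : ℝ)
    (P : Finset α → Prop) : ℝ :=
  ∑ W ∈ ground.powerset,
    if P W then p ^ W.card * (1 - p) ^ (ground.card - W.card) else 0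

open Finset FinsetFamily

/-!
If a maximum intersecting subfamily of the random hypergraph is nontrivial, extend it to a maximal
intersecting family `M` of `k`-sets: then `M` is nontrivial and captures at least as many random
edges as any star. By Hilton–Milner, `M` has at least `binom(n-k-1, k-1) - 1` fewer sets than a
star, so for a fixed `M` an exponential-moment bound makes this very unlikely. A union bound over
all `M` is affordable because there are few of them: `M` consists of all `k`-sets meeting every
member of `M`, and by Bollobás's set-pairs inequality at most `binom(2k, k)` members of `M` suffice
to determine these, whence at most `binom(n, k) ^ binom(2k, k)` choices.
-/

section Shifting

variable {α : Type*} [LinearOrder α]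

lemma compress_singleton_of_mem {i j : α} {e : Finset α} (hi : i ∉ e) (hj : j ∈ e) :
    UV.compress {i} {j} e = insert i (e.erase j) := by
  rw [UV.compress_of_disjoint_of_le (by simpa using hi) (by simpa using hj)]
  ext x
  simp only [sup_eq_union, mem_sdiff, mem_union, mem_singleton, mem_insert, mem_erase]
  grind

lemma intersecting_compression_singleton {i j : α} {F : Finset (Finset α)}
    (hF : (F : Set (Finset α)).Intersecting) :
    (𝓒 {i} {j} F : Set (Finset α)).Intersecting := by
  have new_old {a b : Finset α} (ha : a ∈ 𝓒 {i} {j} F) (haF : a ∉ F)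
      (hb : b ∈ 𝓒 {i} {j} F) (hbF : b ∈ F) : ¬Disjoint a b := by
    intro hab
    have hia : i ∈ a := by simpa using UV.le_of_mem_compression_of_notMem ha haF
    have hja : j ∉ a := by simpa using UV.disjoint_of_mem_compression_of_notMem ha haF
    have haF' := UV.sup_sdiff_mem_of_mem_compression_of_notMem ha haF
    have hjb : j ∈ b := by
      by_contra hjb
      refine hF haF' hbF ?_
      simp only [sup_eq_union, disjoint_left, mem_sdiff, mem_union, mem_singleton] at hab ⊢
      grind
    have hib : i ∉ b := disjoint_left.1 hab hia
    have hbF' : insert i (b.erase j) ∈ F := by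
      rw [UV.mem_compression, compress_singleton_of_mem hib hjb] at hb
      tauto
    refine hF haF' hbF' ?_
    simp only [sup_eq_union, disjoint_left, mem_sdiff, mem_union, mem_singleton, mem_insert,
      mem_erase] at hab ⊢
    grind
  intro a ha b hb hab
  by_cases haF : a ∈ F <;> by_cases hbF : b ∈ F
  · exact hF haF hbF hab
  · exact new_old hb hbF ha haF hab.symm
  · exact new_old ha haF hb hbF hab
  · have hia := UV.le_of_mem_compression_of_notMem ha haF
    have hib := UV.le_of_mem_compression_of_notMem hb hbF
    simpa using hab hia hib

/-- `F` is shifted on `U`: replacing an element of an edge by a smaller element of `U` again gives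
an edge. Only elements of `U` are exchanged, so that a few vertices can be kept fixed. -/
def IsShiftedOn (U : Finset α) (F : Finset (Finset α)) : Prop :=
  ∀ e ∈ F, ∀ i ∈ U, ∀ j ∈ U, i < j → j ∈ e → i ∉ e → insert i (e.erase j) ∈ F

lemma IsShiftedOn.nonMemberSubfamily {U : Finset α} {F : Finset (Finset α)}
    (hF : IsShiftedOn U F) (c : α) : IsShiftedOn (U.erase c) (F.nonMemberSubfamily c) := by
  intro e he i hi j hj hij hje hie
  rw [mem_nonMemberSubfamily] at he ⊢
  refine ⟨hF e he.1 i (mem_of_mem_erase hi) j (mem_of_mem_erase hj) hij hje hie, ?_⟩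
  grind

lemma IsShiftedOn.memberSubfamily {U : Finset α} {F : Finset (Finset α)}
    (hF : IsShiftedOn U F) (c : α) : IsShiftedOn (U.erase c) (F.memberSubfamily c) := by
  intro e he i hi j hj hij hje hie
  rw [mem_memberSubfamily] at he ⊢
  have hmem := hF _ he.1 i (mem_of_mem_erase hi) j (mem_of_mem_erase hj) hij
    (mem_insert_of_mem hje) (by grind)
  rw [erase_insert_of_ne (by grind), Finset.insert_comm] at hmem
  exact ⟨hmem, by grind⟩

/-- The sum of the ranks of all elements of all edges, which every proper shift decreases. -/
def rankSum [Fintype α] (F : Finset (Finset α)) : ℕ := ∑ e ∈ F, ∑ x ∈ e, #{y | y < x}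

lemma rankSum_compression_lt [Fintype α] {i j : α} (hij : i < j) {F : Finset (Finset α)}
    {e : Finset α} (he : e ∈ F) (hje : j ∈ e) (hie : i ∉ e) (hmem : insert i (e.erase j) ∉ F) :
    rankSum (𝓒 {i} {j} F) < rankSum F := by
  have hFilter : {A ∈ F | UV.compress {i} {j} A ∈ F} ∪ {A ∈ F | UV.compress {i} {j} A ∉ F} = F :=
    filter_union_filter_not_eq _ _
  rw [rankSum, rankSum, UV.compression, sum_union UV.compress_disjoint]
  conv_rhs => rw [← hFilter]
  rw [sum_union (disjoint_filter_filter_not _ _ _), add_lt_add_iff_left, filter_image,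
    sum_image UV.compress_injOn]
  refine sum_lt_sum_of_nonempty
    ⟨e, mem_filter.2 ⟨he, by rwa [compress_singleton_of_mem hie hje]⟩⟩ fun A hA ↦ ?_
  rw [mem_filter] at hA
  have hA' : i ∉ A ∧ j ∈ A := by
    by_contra hA'
    refine hA.2 ?_
    rw [UV.compress, if_neg (by simpa using hA')]
    exact hA.1
  rw [compress_singleton_of_mem hA'.1 hA'.2, sum_insert fun hi ↦ hA'.1 (mem_of_mem_erase hi),
    ← add_sum_erase A _ hA'.2, add_lt_add_iff_right]
  refine card_lt_card ⟨fun y ↦ ?_, fun hsub ↦ ?_⟩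
  · simpa using fun hy ↦ hy.trans hij
  · simpa using hsub (mem_filter.2 ⟨mem_univ i, hij⟩)

lemma exists_isShiftedOn [Finite α] (U : Finset α) {P : Finset (Finset α) → Prop}
    (hP : ∀ F, P F → ∀ i ∈ U, ∀ j ∈ U, i < j → P (𝓒 {i} {j} F)) {F : Finset (Finset α)}
    (hF : P F) : ∃ F', P F' ∧ IsShiftedOn U F' := by
  have := Fintype.ofFinite α
  induction h : rankSum F using Nat.strong_induction_on generalizing F with
  | _ r ih =>
    by_cases hsh : IsShiftedOn U F
    · exact ⟨F, hF, hsh⟩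
    · simp only [IsShiftedOn, not_forall] at hsh
      obtain ⟨e, he, i, hi, j, hj, hij, hje, hie, hmem⟩ := hsh
      exact ih _ (h ▸ rankSum_compression_lt hij he hje hie hmem) (hP F hF i hi j hj hij) rfl

end Shifting

section HiltonMilner

variable {α : Type*}

lemma two_le_of_sized_intersecting_nontrivial [DecidableEq α] [Nonempty α]
    {F : Finset (Finset α)} {k : ℕ}
    (hF : (F : Set (Finset α)).Sized k) (hint : (F : Set (Finset α)).Intersecting)
    (hnt : ∀ v, ∃ e ∈ F, v ∉ e) : 2 ≤ k := by
  obtain ⟨e, he, -⟩ := hnt (Classical.arbitrary α)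
  obtain ⟨x, hx⟩ := nonempty_iff_ne_empty.2 (hint.ne_bot he)
  obtain ⟨f, hf, hxf⟩ := hnt x
  obtain ⟨y, hye, hyf⟩ := not_disjoint_iff.1 (hint he hf)
  rw [← hF he]
  exact one_lt_card.2 ⟨x, hx, y, hye, fun h ↦ hxf (h ▸ hyf)⟩

lemma two_mul_card_le_choose_of_intersecting [DecidableEq α] {S : Finset α}
    {F : Finset (Finset α)} {k : ℕ} (hF : F ⊆ S.powersetCard k) (hS : #S = 2 * k)
    (hint : (F : Set (Finset α)).Intersecting) : 2 * #F ≤ (2 * k).choose k := by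
  have hFS {e : Finset α} (he : e ∈ F) : e ⊆ S ∧ #e = k := mem_powersetCard.1 (hF he)
  have hinj : Set.InjOn (S \ ·) (F : Set (Finset α)) := fun e he f hf hef ↦
    by simpa only [Finset.sdiff_sdiff_eq_self, (hFS he).1, (hFS hf).1]
      using congrArg (S \ ·) hef
  have hdisj : Disjoint F (F.image (S \ ·)) := by
    simp only [disjoint_right, forall_mem_image]
    exact fun e he he' ↦ hint he' he sdiff_disjoint
  have hsub : F ∪ F.image (S \ ·) ⊆ S.powersetCard k := by
    refine union_subset hF (image_subset_iff.2 fun e he ↦ mem_powersetCard.2 ⟨sdiff_subset, ?_⟩)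
    rw [card_sdiff_of_subset (hFS he).1, hS, (hFS he).2]
    omega
  calc 2 * #F = #(F ∪ F.image (S \ ·)) := by
        rw [card_union_of_disjoint hdisj, card_image_of_injOn hinj, two_mul]
    _ ≤ #(S.powersetCard k) := card_le_card hsub
    _ = (2 * k).choose k := by rw [card_powersetCard, hS]

lemma card_add_choose_le_of_mem_of_not_disjoint {S f : Finset α} {v : α} {k : ℕ}
    {F : Finset (Finset α)} (hF : F ⊆ S.powersetCard (k + 1)) (hvS : v ∈ S)
    (hfS : f ⊆ S) (hvf : v ∉ f) (hv : ∀ e ∈ F, v ∈ e) (hf : ∀ e ∈ F, ¬Disjoint e f) :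
    #F + (#S - 1 - #f).choose k ≤ (#S - 1).choose k := by
  classical
  have hfS' : f ⊆ S.erase v := subset_erase.2 ⟨hfS, hvf⟩
  have hinj : Set.InjOn (·.erase v) (F : Set (Finset α)) := fun e he e' he' h ↦
    (insert_erase (hv e he)).symm.trans ((congrArg (insert v) h).trans (insert_erase (hv e' he')))
  have hdisj : Disjoint (F.image (·.erase v)) ((S.erase v \ f).powersetCard k) := by
    simp only [disjoint_left, forall_mem_image, mem_powersetCard]
    rintro e he ⟨hef, -⟩
    refine hf e he (disjoint_left.2 fun x hxe hxf ↦ ?_)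
    have hxv : x ≠ v := ne_of_mem_of_not_mem hxf hvf
    exact (mem_sdiff.1 (hef (mem_erase.2 ⟨hxv, hxe⟩))).2 hxf
  have hsub : F.image (·.erase v) ∪ (S.erase v \ f).powersetCard k ⊆
      (S.erase v).powersetCard k := by
    refine union_subset (image_subset_iff.2 fun e he ↦ ?_) (powersetCard_mono sdiff_subset)
    obtain ⟨heS, hek⟩ := mem_powersetCard.1 (hF he)
    rw [mem_powersetCard, card_erase_of_mem (hv e he), hek]
    exact ⟨erase_subset_erase v heS, rfl⟩
  have hcard := card_le_card hsub
  rwa [card_union_of_disjoint hdisj, card_image_of_injOn hinj, card_powersetCard,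
    card_powersetCard, card_sdiff_of_subset hfS', card_erase_of_mem hvS] at hcard

variable [LinearOrder α]

section Step

variable {S T : Finset α} {c : α} {k : ℕ} {F : Finset (Finset α)}

lemma IsShiftedOn.exists_exchange_max (hsh : IsShiftedOn (S \ T) F) (hcS : c ∈ S \ T)
    (hc : ∀ x ∈ S \ T, x ≤ c) {e A : Finset α} (he : e ∈ F) (hce : c ∈ e) (hTA : T ⊆ A)
    (heA : e ⊆ A) (hA : #A < #S) : ∃ x ∉ A, insert x (e.erase c) ∈ F := by
  obtain ⟨x, hxS, hxA⟩ := exists_mem_notMem_of_card_lt_card hA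
  have hxST : x ∈ S \ T := mem_sdiff.2 ⟨hxS, fun hxT ↦ hxA (hTA hxT)⟩
  have hxe : x ∉ e := fun hxe ↦ hxA (heA hxe)
  have hxc : x < c := (hc x hxST).lt_of_ne (by rintro rfl; exact hxe hce)
  exact ⟨x, hxA, hsh e he x hxST c hcS hxc hce hxe⟩

lemma nontrivial_nonMemberSubfamily (hsh : IsShiftedOn (S \ T) F) (hcS : c ∈ S \ T)
    (hc : ∀ x ∈ S \ T, x ≤ c) (hF : (F : Set (Finset α)).Sized k) (hS : k + 2 < #S)
    (hT : ∀ e ∈ F, #(T \ e) ≤ 1) (hnt : ∀ v, ∃ e ∈ F, v ∉ e) (v : α) :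
    ∃ e ∈ F.nonMemberSubfamily c, v ∉ e := by
  obtain ⟨e, he, hve⟩ := hnt v
  simp only [mem_nonMemberSubfamily]
  by_cases hce : c ∈ e
  · have hA : #(insert v (T ∪ e)) < #S := by
      have := card_insert_le v (T ∪ e)
      have := card_sdiff_add_card T e
      have := hT e he
      have := hF he
      omega
    obtain ⟨x, hxA, hx⟩ := hsh.exists_exchange_max hcS hc he hce
      (subset_union_left.trans (subset_insert _ _)) (subset_union_right.trans (subset_insert _ _))
      hA
    exact ⟨_, ⟨hx, by grind⟩, by grind⟩
  · exact ⟨e, ⟨he, hce⟩, hve⟩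

lemma intersecting_memberSubfamily (hsh : IsShiftedOn (S \ T) F) (hcS : c ∈ S \ T)
    (hc : ∀ x ∈ S \ T, x ≤ c) (hF : (F : Set (Finset α)).Sized k) (hS : 2 * k < #S)
    (hT : ∀ e ∈ F, #(T \ e) ≤ 1) (hint : (F : Set (Finset α)).Intersecting) :
    (F.memberSubfamily c : Set (Finset α)).Intersecting := by
  intro a ha b hb hab
  obtain ⟨ha, hca⟩ := mem_memberSubfamily.1 ha
  obtain ⟨hb, hcb⟩ := mem_memberSubfamily.1 hb
  have hA : #(T ∪ (insert c a ∪ b)) < #S := by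
    have hTA : #(T \ (insert c a ∪ b)) ≤ 1 :=
      (card_le_card (sdiff_subset_sdiff subset_rfl subset_union_left)).trans (hT _ ha)
    have := card_sdiff_add_card T (insert c a ∪ b)
    have := card_union_le (insert c a) b
    have := hF ha
    have := hF hb
    rw [card_insert_of_notMem hcb] at this
    omega
  obtain ⟨x, hxA, hx⟩ := hsh.exists_exchange_max hcS hc ha (mem_insert_self c a)
    subset_union_left (subset_union_left.trans subset_union_right) hA
  refine hint hx hb ?_
  rw [erase_insert hca]
  rw [disjoint_left] at hab ⊢
  grind

end Step

lemma card_add_choose_le_of_card_eq_two_mul {S : Finset α} {F : Finset (Finset α)} {k : ℕ}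
    (hF : F ⊆ S.powersetCard (k + 1)) (hS : #S = 2 * (k + 1))
    (hint : (F : Set (Finset α)).Intersecting) :
    #F + (#S - k - 2).choose k ≤ (#S - 1).choose k + 1 := by
  have hcard := two_mul_card_le_choose_of_intersecting hF hS hint
  have hhalf : (2 * (k + 1)).choose (k + 1) = 2 * (2 * k + 1).choose k := by
    rw [show 2 * (k + 1) = 2 * k + 1 + 1 by ring, Nat.choose_succ_succ', Nat.choose_symm_half,
      ← two_mul]
  rw [hS, show 2 * (k + 1) - k - 2 = k by omega, show 2 * (k + 1) - 1 = 2 * k + 1 by omega,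
    Nat.choose_self]
  omega

lemma nonMemberSubfamily_subset_powersetCard {S : Finset α} {F : Finset (Finset α)} {k : ℕ}
    (hF : F ⊆ S.powersetCard k) (c : α) :
    F.nonMemberSubfamily c ⊆ (S.erase c).powersetCard k := by
  intro e he
  obtain ⟨he, hce⟩ := mem_nonMemberSubfamily.1 he
  obtain ⟨heS, hek⟩ := mem_powersetCard.1 (hF he)
  exact mem_powersetCard.2 ⟨subset_erase.2 ⟨heS, hce⟩, hek⟩

lemma memberSubfamily_subset_powersetCard {S : Finset α} {F : Finset (Finset α)} {k : ℕ}
    (hF : F ⊆ S.powersetCard (k + 1)) (c : α) :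
    F.memberSubfamily c ⊆ (S.erase c).powersetCard k := by
  intro e he
  obtain ⟨he, hce⟩ := mem_memberSubfamily.1 he
  obtain ⟨heS, hek⟩ := mem_powersetCard.1 (hF he)
  rw [card_insert_of_notMem hce, Nat.add_right_cancel_iff] at hek
  exact mem_powersetCard.2 ⟨subset_erase.2 ⟨(insert_subset_iff.1 heS).2, hce⟩, hek⟩

lemma not_disjoint_memberSubfamily_nonMemberSubfamily {F : Finset (Finset α)} {c : α}
    (hint : (F : Set (Finset α)).Intersecting) {e f : Finset α} (he : e ∈ F.memberSubfamily c)
    (hf : f ∈ F.nonMemberSubfamily c) : ¬Disjoint e f := by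
  obtain ⟨hf, hcf⟩ := mem_nonMemberSubfamily.1 hf
  exact fun hef ↦ hint (mem_memberSubfamily.1 he).1 hf (disjoint_insert_left.2 ⟨hcf, hef⟩)

lemma exists_max_sdiff {S T : Finset α} {F : Finset (Finset α)} {k : ℕ}
    (hF : (F : Set (Finset α)).Sized k) (hFne : F.Nonempty) (hS : k + 1 < #S)
    (hT : ∀ e ∈ F, #(T \ e) ≤ 1) : ∃ c ∈ S \ T, ∀ x ∈ S \ T, x ≤ c := by
  obtain ⟨e, he⟩ := hFne
  have hTS : #T < #S := by
    have := card_sdiff_add_card T e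
    have := card_le_card (subset_union_left (s₁ := T) (s₂ := e))
    have := hT e he
    have := hF he
    omega
  obtain ⟨x, hxS, hxT⟩ := exists_mem_notMem_of_card_lt_card hTS
  exact ⟨_, max'_mem _ ⟨x, mem_sdiff.2 ⟨hxS, hxT⟩⟩, le_max' _⟩

lemma choose_lt_choose_succ {m k : ℕ} (hk : 0 < k) (hkm : k ≤ m + 1) :
    m.choose k < (m + 1).choose k := by
  obtain ⟨i, rfl⟩ := Nat.exists_eq_add_one.2 hk
  have := Nat.choose_pos (show i ≤ m by omega)
  have := Nat.choose_succ_succ' m i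
  omega

lemma card_add_choose_le_of_cross_intersecting {S : Finset α} {F G : Finset (Finset α)}
    {k : ℕ} (hS : 2 * (k + 1) < #S)
    (hF : F ⊆ S.powersetCard (k + 1)) (hG : G ⊆ S.powersetCard (k + 2))
    (hint : (F : Set (Finset α)).Intersecting) (hntG : ∀ v, ∃ e ∈ G, v ∉ e)
    (hFG : ∀ e ∈ F, ∀ f ∈ G, ¬Disjoint e f)
    (hHM : (∀ v, ∃ e ∈ F, v ∉ e) → #F + (#S - k - 2).choose k ≤ (#S - 1).choose k + 1) :
    #F + (#S - k - 3).choose k ≤ (#S - 1).choose k := by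
  by_cases hnt : ∀ v, ∃ e ∈ F, v ∉ e
  · have : Nonempty α := (card_pos.1 (by omega : 0 < #S)).to_type
    have hk := two_le_of_sized_intersecting_nontrivial
      (fun e he ↦ (mem_powersetCard.1 (hF he)).2) hint hnt
    have hlt := choose_lt_choose_succ (m := #S - k - 3) (k := k) (by omega) (by omega)
    rw [show #S - k - 3 + 1 = #S - k - 2 by omega] at hlt
    have := hHM hnt
    omega
  · push Not at hnt
    obtain ⟨v, hv⟩ := hnt
    rcases F.eq_empty_or_nonempty with rfl | ⟨e, he⟩
    · simpa using Nat.choose_le_choose k (show #S - k - 3 ≤ #S - 1 by omega)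
    · obtain ⟨f, hf, hvf⟩ := hntG v
      obtain ⟨hfS, hfk⟩ := mem_powersetCard.1 (hG hf)
      rw [show #S - k - 3 = #S - 1 - #f by omega]
      exact card_add_choose_le_of_mem_of_not_disjoint hF
        ((mem_powersetCard.1 (hF he)).1 (hv e he)) hfS hvf hv fun e he ↦ hFG e he f hf

/-- The induction on the ground set removes its largest exchangeable element `c`: the edges avoiding
`c` and the links of `c` are both intersecting, and they meet each other. -/
theorem IsShiftedOn.card_add_choose_le {S T : Finset α} {F : Finset (Finset α)} {k : ℕ}
    (hsh : IsShiftedOn (S \ T) F) (hF : F ⊆ S.powersetCard (k + 1))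
    (hS : 2 * (k + 1) ≤ #S) (hT : ∀ e ∈ F, #(T \ e) ≤ 1)
    (hint : (F : Set (Finset α)).Intersecting) (hnt : ∀ v, ∃ e ∈ F, v ∉ e) :
    #F + (#S - k - 2).choose k ≤ (#S - 1).choose k + 1 := by
  have : Nonempty α := (card_pos.1 (by omega : 0 < #S)).to_type
  induction h : #S generalizing S F k with
  | zero => omega
  | succ m ih =>
    rcases hS.eq_or_lt with hS | hS
    · exact h ▸ card_add_choose_le_of_card_eq_two_mul hF hS.symm hint
    have hsized : (F : Set (Finset α)).Sized (k + 1) := fun e he ↦ (mem_powersetCard.1 (hF he)).2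
    obtain ⟨i, rfl⟩ : ∃ i, k = i + 1 := Nat.exists_eq_add_one.2 <|
      Nat.le_of_succ_le_succ (two_le_of_sized_intersecting_nontrivial hsized hint hnt)
    obtain ⟨e, he, -⟩ := hnt (Classical.arbitrary α)
    obtain ⟨c, hcST, hc⟩ := exists_max_sdiff (S := S) hsized ⟨e, he⟩ (by omega) hT
    obtain ⟨hcS, hcT⟩ := mem_sdiff.1 hcST
    have hm : #(S.erase c) = m := by rw [card_erase_of_mem hcS, h, Nat.add_sub_cancel]
    have hF₀ := nonMemberSubfamily_subset_powersetCard hF c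
    have hF₁ := memberSubfamily_subset_powersetCard hF c
    have hnt₀ := nontrivial_nonMemberSubfamily hsh hcST hc hsized (by omega) hT hnt
    have bound₀ : #(F.nonMemberSubfamily c) + (m - i - 3).choose (i + 1) ≤
        (m - 1).choose (i + 1) + 1 :=
      ih (erase_sdiff_comm S T c ▸ hsh.nonMemberSubfamily c) hF₀ (by omega)
        (fun e he ↦ hT e (mem_nonMemberSubfamily.1 he).1)
        (hint.mono (coe_subset.2 (filter_subset _ _))) hnt₀ hm
    have bound₁ : #(F.memberSubfamily c) + (m - i - 3).choose i ≤ (m - 1).choose i := by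
      have hint₁ := intersecting_memberSubfamily hsh hcST hc hsized hS hT hint
      rw [← hm]
      refine card_add_choose_le_of_cross_intersecting (by omega) hF₁ hF₀ hint₁ hnt₀
        (fun e he f hf ↦ not_disjoint_memberSubfamily_nonMemberSubfamily hint he hf)
        fun hnt₁ ↦ hm ▸ ih (erase_sdiff_comm S T c ▸ hsh.memberSubfamily c) hF₁ (by omega)
          (fun e he ↦ ?_) hint₁ hnt₁ hm
      exact sdiff_insert_of_notMem hcT e ▸ hT _ (mem_memberSubfamily.1 he).1
    have hcard := card_memberSubfamily_add_card_nonMemberSubfamily c F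
    have hpascal := Nat.choose_succ_succ' (m - i - 3) i
    have hpascal' := Nat.choose_succ_succ' (m - 1) i
    rw [show m - i - 3 + 1 = m + 1 - (i + 1) - 2 by omega] at hpascal
    rw [show m - 1 + 1 = m + 1 - 1 by omega] at hpascal'
    omega

section Compress

variable {i j x : α} {e : Finset α} {F : Finset (Finset α)}

lemma mem_compress_singleton_iff_of_ne (hxi : x ≠ i) (hxj : x ≠ j) :
    x ∈ UV.compress {i} {j} e ↔ x ∈ e := by
  rw [UV.compress]
  split_ifs <;> simp [hxi, hxj]

lemma eq_of_mem_compress_singleton_of_notMem (hx : x ∈ UV.compress {i} {j} e) (hxe : x ∉ e) :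
    x = i := by
  rw [UV.compress] at hx
  split_ifs at hx
  · simp only [sup_eq_union, mem_sdiff, mem_union, mem_singleton] at hx
    tauto
  · exact absurd hx hxe

lemma mem_or_mem_of_mem_compress_singleton (hi : i ∈ UV.compress {i} {j} e) : i ∈ e ∨ j ∈ e := by
  rw [UV.compress] at hi
  split_ifs at hi with h
  · exact .inr (singleton_subset_iff.1 h.2)
  · exact .inl hi

lemma exists_mem_iff_of_mem_compression_singleton (he : e ∈ 𝓒 {i} {j} F) :
    ∃ f ∈ F, ∀ x, x ≠ i → x ≠ j → (x ∈ e ↔ x ∈ f) := by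
  obtain ⟨he, -⟩ | ⟨-, f, hf, rfl⟩ := UV.mem_compression.1 he
  · exact ⟨e, he, fun _ _ _ ↦ Iff.rfl⟩
  · exact ⟨f, hf, fun _ ↦ mem_compress_singleton_iff_of_ne⟩

end Compress

/-- A `k`-uniform intersecting family without common vertex in which every edge meets `{a, b}`,
enlarged by all `k`-sets containing `{a, b}`. Every property listed here survives shifts that
move neither `a` nor `b`. -/
structure IsSaturatedCover (a b : α) (k : ℕ) (F : Finset (Finset α)) : Prop where
  sized : (F : Set (Finset α)).Sized k
  intersecting : (F : Set (Finset α)).Intersecting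
  mem_or_mem : ∀ e ∈ F, a ∈ e ∨ b ∈ e
  saturated : ∀ e, #e = k → a ∈ e → b ∈ e → e ∈ F
  exists_notMem_left : ∃ e ∈ F, a ∉ e
  exists_notMem_right : ∃ e ∈ F, b ∉ e

namespace IsSaturatedCover

variable {a b i j : α} {k : ℕ} {F : Finset (Finset α)}

lemma compression (hF : IsSaturatedCover a b k F) (hia : a ≠ i) (hja : a ≠ j) (hib : b ≠ i)
    (hjb : b ≠ j) : IsSaturatedCover a b k (𝓒 {i} {j} F) where
  sized := hF.sized.uvCompression (by simp)
  intersecting := intersecting_compression_singleton hF.intersecting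
  mem_or_mem e he := by
    obtain ⟨f, hf, hef⟩ := exists_mem_iff_of_mem_compression_singleton he
    rw [hef a hia hja, hef b hib hjb]
    exact hF.mem_or_mem f hf
  saturated e hek hae hbe := by
    refine UV.mem_compression.2 (.inl ⟨hF.saturated e hek hae hbe, hF.saturated _ ?_ ?_ ?_⟩)
    · rw [UV.card_compress (by simp), hek]
    · rwa [mem_compress_singleton_iff_of_ne hia hja]
    · rwa [mem_compress_singleton_iff_of_ne hib hjb]
  exists_notMem_left := by
    obtain ⟨e, he, hae⟩ := hF.exists_notMem_left
    exact ⟨_, UV.compress_mem_compression he, by rwa [mem_compress_singleton_iff_of_ne hia hja]⟩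
  exists_notMem_right := by
    obtain ⟨e, he, hbe⟩ := hF.exists_notMem_right
    exact ⟨_, UV.compress_mem_compression he, by rwa [mem_compress_singleton_iff_of_ne hib hjb]⟩

lemma nontrivial [Fintype α] (hF : IsSaturatedCover a b k F) (hk : 2 ≤ k)
    (hcard : k < Fintype.card α) (v : α) : ∃ e ∈ F, v ∉ e := by
  by_cases hva : v = a
  · exact hva ▸ hF.exists_notMem_left
  by_cases hvb : v = b
  · exact hvb ▸ hF.exists_notMem_right
  have hsub : {a, b} ⊆ univ.erase v := by
    simpa [insert_subset_iff, eq_comm] using And.intro hva hvb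
  obtain ⟨e, habe, hev, hek⟩ := exists_subsuperset_card_eq hsub (card_le_two.trans hk)
    (by rw [card_erase_of_mem (mem_univ v), card_univ]; omega)
  exact ⟨e, hF.saturated e hek (habe (by simp)) (habe (by simp)), fun hve ↦ by simpa using hev hve⟩

lemma card_sdiff_le_one (hF : IsSaturatedCover a b k F) {e : Finset α} (he : e ∈ F) :
    #({a, b} \ e) ≤ 1 := by
  refine card_le_one.2 fun x hx y hy ↦ ?_
  have := hF.mem_or_mem e he
  grind

lemma union_filter [Fintype α] (hsized : (F : Set (Finset α)).Sized k)
    (hint : (F : Set (Finset α)).Intersecting) (hnt : ∀ v, ∃ e ∈ F, v ∉ e)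
    (hcov : ∀ e ∈ F, a ∈ e ∨ b ∈ e) :
    IsSaturatedCover a b k (F ∪ {e ∈ (univ : Finset α).powersetCard k | a ∈ e ∧ b ∈ e}) where
  sized e he := by
    simp only [coe_union, coe_filter, Set.mem_union, mem_coe] at he
    exact he.elim (hsized ·) fun he ↦ (mem_powersetCard.1 he.1).2
  intersecting e he f hf hef := by
    simp only [coe_union, coe_filter, Set.mem_union, mem_coe] at he hf
    rw [disjoint_left] at hef
    rcases he with he | ⟨-, hae, hbe⟩ <;> rcases hf with hf | ⟨-, haf, hbf⟩
    · exact hint he hf (disjoint_left.2 hef)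
    · exact (hcov e he).elim (hef · haf) (hef · hbf)
    · exact (hcov f hf).elim (hef hae) (hef hbe)
    · exact hef hae haf
  mem_or_mem e he := by
    obtain he | he := mem_union.1 he
    exacts [hcov e he, .inl (mem_filter.1 he).2.1]
  saturated e hek hae hbe := mem_union_right _ <|
    mem_filter.2 ⟨mem_powersetCard.2 ⟨subset_univ e, hek⟩, hae, hbe⟩
  exists_notMem_left := (hnt a).imp fun _ he ↦ ⟨mem_union_left _ he.1, he.2⟩
  exists_notMem_right := (hnt b).imp fun _ he ↦ ⟨mem_union_left _ he.1, he.2⟩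

end IsSaturatedCover

lemma card_add_choose_le_of_two_cover [Fintype α] {a b : α} {k : ℕ} {F : Finset (Finset α)}
    (hcard : 2 * (k + 1) ≤ Fintype.card α) (hF : (F : Set (Finset α)).Sized (k + 1))
    (hint : (F : Set (Finset α)).Intersecting) (hnt : ∀ v, ∃ e ∈ F, v ∉ e)
    (hcov : ∀ e ∈ F, a ∈ e ∨ b ∈ e) :
    #F + (Fintype.card α - k - 2).choose k ≤ (Fintype.card α - 1).choose k + 1 := by
  have : Nonempty α := ⟨a⟩
  have hk := two_le_of_sized_intersecting_nontrivial hF hint hnt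
  obtain ⟨G, ⟨hG, hFG⟩, hsh⟩ := exists_isShiftedOn (univ \ {a, b})
    (P := fun G ↦ IsSaturatedCover a b (k + 1) G ∧ #F ≤ #G)
    (fun G hG i hi j hj _ ↦ by
      simp only [mem_sdiff, mem_insert, mem_singleton, not_or] at hi hj
      rw [UV.card_compression]
      exact ⟨hG.1.compression (Ne.symm hi.2.1) (Ne.symm hj.2.1) (Ne.symm hi.2.2)
        (Ne.symm hj.2.2), hG.2⟩)
    ⟨IsSaturatedCover.union_filter hF hint hnt hcov, card_le_card subset_union_left⟩
  have := hsh.card_add_choose_le (subset_powersetCard_univ_iff.2 hG.sized) hcard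
    (fun e ↦ hG.card_sdiff_le_one) hG.intersecting (hG.nontrivial hk (by omega))
  exact (Nat.add_le_add_right hFG _).trans this

lemma two_cover_of_trivial_compression {i j v : α} {F : Finset (Finset α)}
    (hnt : ∀ v, ∃ e ∈ F, v ∉ e) (hv : ∀ e ∈ 𝓒 {i} {j} F, v ∈ e) {e : Finset α} (he : e ∈ F) :
    i ∈ e ∨ j ∈ e := by
  obtain ⟨f, hf, hvf⟩ := hnt v
  obtain rfl := eq_of_mem_compress_singleton_of_notMem (hv _ (UV.compress_mem_compression hf)) hvf
  exact mem_or_mem_of_mem_compress_singleton (hv _ (UV.compress_mem_compression he))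

end HiltonMilner

/-- The **Hilton–Milner theorem**. Shifting could make the family trivial, but a shift that does
so shows that two vertices already meet all edges. -/
theorem card_add_choose_le_of_intersecting_nontrivial {α : Type*} [Fintype α] [DecidableEq α]
    [Nonempty α] {F : Finset (Finset α)} {k : ℕ} (hk : 2 * k ≤ Fintype.card α)
    (hF : (F : Set (Finset α)).Sized k) (hint : (F : Set (Finset α)).Intersecting)
    (hnt : ∀ v, ∃ e ∈ F, v ∉ e) :
    #F + (Fintype.card α - k - 1).choose (k - 1) ≤ (Fintype.card α - 1).choose (k - 1) + 1 := by
  let : LinearOrder α := LinearOrder.lift' (Fintype.equivFin α) (Fintype.equivFin α).injective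
  obtain rfl : ‹DecidableEq α› = LinearOrder.toDecidableEq := Subsingleton.elim _ _
  have hk2 := two_le_of_sized_intersecting_nontrivial hF hint hnt
  obtain ⟨k, rfl⟩ : ∃ m, k = m + 1 := Nat.exists_eq_add_one.2 (by omega)
  by_contra hcon
  obtain ⟨G, ⟨hG, hGint, hGnt, hGF⟩, hsh⟩ := exists_isShiftedOn univ
    (P := fun G ↦ (G : Set (Finset α)).Sized (k + 1) ∧ (G : Set (Finset α)).Intersecting ∧
      (∀ v, ∃ e ∈ G, v ∉ e) ∧ #G = #F)
    (fun G ⟨hG, hGint, hGnt, hGF⟩ i _ j _ _ ↦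
      ⟨hG.uvCompression (by simp), intersecting_compression_singleton hGint, by
        by_contra! htriv
        obtain ⟨v, hv⟩ := htriv
        rw [← hGF] at hcon
        exact hcon (card_add_choose_le_of_two_cover hk hG hGint hGnt fun e ↦
          two_cover_of_trivial_compression hGnt hv), by rw [UV.card_compression, hGF]⟩)
    ⟨hF, hint, hnt, rfl⟩
  rw [← hGF] at hcon
  exact hcon (IsShiftedOn.card_add_choose_le (T := ∅) (by rwa [sdiff_empty])
    (subset_powersetCard_univ_iff.2 hG) hk (by simp) hGint hGnt)

section SetPairs

variable {α ι : Type*}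

lemma succ_mul_inv_choose_add (a b : ℕ) :
    ((b + 1 : ℕ) : ℚ) * ((a + b).choose a : ℚ)⁻¹ =
      ((a + (b + 1) : ℕ) : ℚ) * ((a + (b + 1)).choose a : ℚ)⁻¹ := by
  have h := Nat.choose_mul_succ_eq (a + b) a
  rw [show a + b + 1 - a = b + 1 by omega] at h
  have h1 : ((a + b).choose a : ℚ) ≠ 0 := by exact_mod_cast (Nat.choose_pos (by omega)).ne'
  have h2 : ((a + (b + 1)).choose a : ℚ) ≠ 0 := by
    exact_mod_cast (Nat.choose_pos (by omega)).ne'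
  rw [← div_eq_mul_inv, ← div_eq_mul_inv, div_eq_div_iff h1 h2]
  norm_cast
  rw [← add_assoc]
  linarith

lemma sum_sdiff_inv_choose_erase [DecidableEq α] {X A B : Finset α} (hA : A ⊆ X) (hB : B ⊆ X)
    (hAB : Disjoint A B) (hne : B.Nonempty) :
    ∑ x ∈ X \ A, ((#A + #(B.erase x)).choose #A : ℚ)⁻¹ =
      #X * ((#A + #B).choose #A : ℚ)⁻¹ := by
  obtain ⟨b, hb⟩ := Nat.exists_eq_add_one.2 hne.card_pos
  have hin : ∑ x ∈ B, ((#A + #(B.erase x)).choose #A : ℚ)⁻¹ =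
      (#A + #B : ℕ) * ((#A + #B).choose #A : ℚ)⁻¹ := by
    rw [sum_congr rfl fun x hx ↦ by rw [card_erase_of_mem hx], sum_const, nsmul_eq_mul, hb,
      Nat.add_sub_cancel, succ_mul_inv_choose_add]
  have hout : ∑ x ∈ X \ (A ∪ B), ((#A + #(B.erase x)).choose #A : ℚ)⁻¹ =
      #(X \ (A ∪ B)) * ((#A + #B).choose #A : ℚ)⁻¹ := by
    rw [sum_congr rfl fun x hx ↦ by
      rw [erase_eq_of_notMem fun h ↦ (mem_sdiff.1 hx).2 (mem_union_right _ h)],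
      sum_const, nsmul_eq_mul]
  have hX : #(X \ (A ∪ B)) + (#A + #B) = #X := by
    rw [← card_union_of_disjoint hAB, card_sdiff_add_card_eq_card (union_subset hA hB)]
  rw [← sum_sdiff (subset_sdiff.2 ⟨hB, hAB.symm⟩), sdiff_sdiff_left, sup_eq_union, hout, hin,
    ← add_mul, ← Nat.cast_add, hX]

/-- **Bollobás's set-pairs inequality**. For each `x`, the pairs with `x ∉ A i` still satisfy the
hypotheses on the ground set `X.erase x` once `x` is removed from every `B i`; averaging the
resulting inequalities over `x` gives the one for `X`. -/
theorem sum_inv_choose_le_one_of_set_pairs {X : Finset α} {I : Finset ι} {A B : ι → Finset α}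
    (hA : ∀ i ∈ I, A i ⊆ X) (hB : ∀ i ∈ I, B i ⊆ X) (hAB : ∀ i ∈ I, Disjoint (A i) (B i))
    (hcross : ∀ i ∈ I, ∀ j ∈ I, i ≠ j → ¬Disjoint (A i) (B j)) :
    ∑ i ∈ I, ((#(A i) + #(B i)).choose #(A i) : ℚ)⁻¹ ≤ 1 := by
  classical
  induction hX : #X generalizing X I B with
  | zero =>
    obtain rfl := card_eq_zero.1 hX
    have hI : #I ≤ 1 := card_le_one.2 fun i hi j hj ↦ by
      by_contra hij
      exact hcross i hi j hj hij (by simp [subset_empty.1 (hA i hi)])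
    calc ∑ i ∈ I, ((#(A i) + #(B i)).choose #(A i) : ℚ)⁻¹ = #I := by
          rw [sum_congr rfl fun i hi ↦ by
            rw [subset_empty.1 (hA i hi), subset_empty.1 (hB i hi)]]
          simp
      _ ≤ 1 := mod_cast hI
  | succ N ih =>
    by_cases hempty : ∃ i ∈ I, B i = ∅
    · obtain ⟨i, hi, hBi⟩ := hempty
      have hI : I = {i} := eq_singleton_iff_unique_mem.2 ⟨hi, fun j hj ↦ by
        by_contra hji
        exact hcross j hj i hi hji (by simp [hBi])⟩
      simp [hI, hBi]
    push Not at hempty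
    have herase : ∀ x ∈ X, ∑ i ∈ I with x ∉ A i,
        ((#(A i) + #((B i).erase x)).choose #(A i) : ℚ)⁻¹ ≤ 1 := by
      intro x hx
      refine ih (X := X.erase x) ?_ ?_ ?_ ?_ (by rw [card_erase_of_mem hx, hX]; rfl) <;>
        simp only [mem_filter, and_imp]
      · exact fun i hi hxi ↦ subset_erase.2 ⟨hA i hi, hxi⟩
      · exact fun i hi _ ↦ erase_subset_erase x (hB i hi)
      · exact fun i hi _ ↦ (hAB i hi).mono_right (erase_subset x _)
      · intro i hi hxi j hj _ hij
        rw [← disjoint_erase_comm, erase_eq_of_notMem hxi]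
        exact hcross i hi j hj hij
    have haverage : (#X : ℚ) * ∑ i ∈ I, ((#(A i) + #(B i)).choose #(A i) : ℚ)⁻¹ ≤ #X * 1 :=
      calc (#X : ℚ) * ∑ i ∈ I, ((#(A i) + #(B i)).choose #(A i) : ℚ)⁻¹
          = ∑ i ∈ I, ∑ x ∈ X \ A i, ((#(A i) + #((B i).erase x)).choose #(A i) : ℚ)⁻¹ := by
            rw [mul_sum]
            exact sum_congr rfl fun i hi ↦ (sum_sdiff_inv_choose_erase (hA i hi) (hB i hi)
              (hAB i hi) (hempty i hi)).symm
        _ = ∑ x ∈ X, ∑ i ∈ I with x ∉ A i,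
              ((#(A i) + #((B i).erase x)).choose #(A i) : ℚ)⁻¹ :=
            sum_comm' (by simp only [mem_sdiff, mem_filter]; tauto)
        _ ≤ ∑ x ∈ X, 1 := sum_le_sum herase
        _ = #X * 1 := by rw [sum_const, nsmul_eq_mul]
    exact le_of_mul_le_mul_left haverage (by rw [hX]; positivity)

theorem card_le_choose_of_set_pairs {I : Finset ι} {A B : ι → Finset α} {a b : ℕ}
    (hA : ∀ i ∈ I, #(A i) = a) (hB : ∀ i ∈ I, #(B i) = b) (hAB : ∀ i ∈ I, Disjoint (A i) (B i))
    (hcross : ∀ i ∈ I, ∀ j ∈ I, i ≠ j → ¬Disjoint (A i) (B j)) : #I ≤ (a + b).choose a := by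
  classical
  have hX : ∀ i ∈ I, A i ∪ B i ⊆ I.biUnion fun i ↦ A i ∪ B i := fun i hi ↦
    subset_biUnion_of_mem (fun i ↦ A i ∪ B i) hi
  have h := sum_inv_choose_le_one_of_set_pairs (fun i hi ↦ subset_union_left.trans (hX i hi))
    (fun i hi ↦ subset_union_right.trans (hX i hi)) hAB hcross
  rw [sum_congr rfl fun i hi ↦ by rw [hA i hi, hB i hi], sum_const, nsmul_eq_mul,
    ← div_eq_mul_inv, div_le_one (by exact_mod_cast Nat.choose_pos (by omega))] at h
  exact_mod_cast h

end SetPairs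

section MaximalIntersecting

variable {α : Type*} [DecidableEq α] {k : ℕ} {F G M : Finset (Finset α)}

/-- A `k`-uniform intersecting family on `α` that is maximal under inclusion among all of these,
as opposed to one with the largest number of members. -/
def IsMaximalIntersecting (k : ℕ) (M : Finset (Finset α)) : Prop :=
  Maximal (fun G : Finset (Finset α) ↦
    (G : Set (Finset α)).Sized k ∧ (G : Set (Finset α)).Intersecting) M

lemma exists_isMaximalIntersecting [Finite α] (hF : (F : Set (Finset α)).Sized k)
    (hint : (F : Set (Finset α)).Intersecting) : ∃ M, F ⊆ M ∧ IsMaximalIntersecting k M :=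
  (Set.toFinite {G : Finset (Finset α) | (G : Set (Finset α)).Sized k ∧
    (G : Set (Finset α)).Intersecting}).exists_le_maximal ⟨hF, hint⟩

variable [Fintype α]

/-- The `k`-sets meeting every member of `G`, that is, the `k`-uniform blocker of `G`. -/
def transversals (k : ℕ) (G : Finset (Finset α)) : Finset (Finset α) :=
  {e ∈ powersetCard k univ | ∀ f ∈ G, ¬Disjoint f e}

lemma mem_transversals {e : Finset α} :
    e ∈ transversals k G ↔ #e = k ∧ ∀ f ∈ G, ¬Disjoint f e := by
  rw [transversals, mem_filter, mem_powersetCard_univ]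

lemma transversals_anti (h : G ⊆ M) : transversals k M ⊆ transversals k G := fun _ he ↦
  mem_transversals.2 ⟨(mem_transversals.1 he).1, fun f hf ↦ (mem_transversals.1 he).2 f (h hf)⟩

/-- Each member `e` of a minimal subfamily `G` with the same transversals as `M` is indispensable,
so some `k`-set misses `e` but meets the rest of `G`: these are set pairs. -/
lemma exists_subset_transversals_eq {a : ℕ} (k : ℕ) (hM : (M : Set (Finset α)).Sized a) :
    ∃ G ⊆ M, transversals k G = transversals k M ∧ #G ≤ (a + k).choose a := by
  obtain ⟨G, hG⟩ := (Set.toFinite {G | G ⊆ M ∧ transversals k G = transversals k M}).exists_minimal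
    ⟨M, Subset.rfl, rfl⟩
  refine ⟨G, hG.prop.1, hG.prop.2, ?_⟩
  have hwitness : ∀ e ∈ G, ∃ h ∈ transversals k (G.erase e), Disjoint e h := by
    intro e he
    by_contra! hdispensable
    refine notMem_erase e G (hG.le_of_le ⟨(erase_subset e G).trans hG.prop.1, ?_⟩
      (erase_subset e G) he)
    refine Subset.antisymm (fun h hh ↦ ?_) (transversals_anti ((erase_subset e G).trans hG.prop.1))
    rw [← hG.prop.2]
    refine mem_transversals.2 ⟨(mem_transversals.1 hh).1, fun f hf ↦ ?_⟩
    obtain rfl | hfe := eq_or_ne f e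
    · exact hdispensable h hh
    · exact (mem_transversals.1 hh).2 f (mem_erase.2 ⟨hfe, hf⟩)
  choose! H hH hdisj using hwitness
  exact card_le_choose_of_set_pairs (A := id) (B := H) (fun e he ↦ hM (hG.prop.1 he))
    (fun e he ↦ (mem_transversals.1 (hH e he)).1) hdisj
    fun e he f hf hef ↦ (mem_transversals.1 (hH f hf)).2 e (mem_erase.2 ⟨hef, he⟩)

namespace IsMaximalIntersecting

lemma transversals_eq (hM : IsMaximalIntersecting k M) (hk : 0 < k) : transversals k M = M := by
  refine Subset.antisymm (fun e he ↦ ?_)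
    fun e he ↦ mem_transversals.2 ⟨hM.prop.1 he, fun f hf ↦ hM.prop.2 hf he⟩
  obtain ⟨hek, hmeet⟩ := mem_transversals.1 he
  refine hM.le_of_ge ⟨?_, ?_⟩ (subset_insert e M) (mem_insert_self e M)
  · rw [coe_insert, Set.insert_eq, Set.sized_union, Set.sized_singleton]
    exact ⟨hek, hM.prop.1⟩
  · rw [coe_insert]
    exact hM.prop.2.insert (card_pos.1 (hek ▸ hk)).ne_empty fun f hf h ↦ hmeet f hf h.symm

lemma exists_transversals_eq (hM : IsMaximalIntersecting k M) (hk : 0 < k)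
    (hcard : 2 * k ≤ Fintype.card α) : ∃ c : Fin ((2 * k).choose k) → Finset α,
      (∀ i, #(c i) = k) ∧ transversals k (univ.image c) = M := by
  obtain ⟨G, hGM, hGtrans, hGcard⟩ := exists_subset_transversals_eq k hM.prop.1
  rw [hM.transversals_eq hk] at hGtrans
  have hGne : G.Nonempty := by
    by_contra! hG
    obtain ⟨e, -, hek⟩ := exists_subset_card_eq (s := (univ : Finset α)) (n := k)
      (by rw [card_univ]; omega)
    obtain ⟨f, hfe, hfk⟩ := exists_subset_card_eq (s := eᶜ) (n := k)
      (by rw [card_compl]; omega)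
    have hmem : ∀ h : Finset α, #h = k → h ∈ M := fun h hh ↦ by
      rw [← hGtrans, mem_transversals, hG]
      simp [hh]
    exact hM.prop.2 (hmem e hek) (hmem f hfk) (subset_compl_iff_disjoint_left.1 hfe)
  have : Nonempty G := hGne.to_subtype
  obtain ⟨φ⟩ : Nonempty (G ↪ Fin ((2 * k).choose k)) :=
    Function.Embedding.nonempty_of_card_le (by simpa [two_mul] using hGcard)
  obtain ⟨ψ, hψ⟩ : ∃ ψ : Fin ((2 * k).choose k) → G, Function.Surjective ψ :=
    ⟨_, Function.invFun_surjective φ.injective⟩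
  have himage : univ.image (fun i ↦ (ψ i : Finset α)) = G := by
    ext e
    simp only [mem_image, mem_univ, true_and]
    exact ⟨fun ⟨i, hi⟩ ↦ hi ▸ (ψ i).2, fun he ↦ (hψ ⟨e, he⟩).imp fun i hi ↦ by rw [hi]⟩
  exact ⟨_, fun i ↦ hM.prop.1 (hGM (ψ i).2), by rw [himage, hGtrans]⟩

end IsMaximalIntersecting

open Classical in
theorem card_isMaximalIntersecting_le (hk : 0 < k) (hcard : 2 * k ≤ Fintype.card α) :
    #{M : Finset (Finset α) | IsMaximalIntersecting k M} ≤
      (Fintype.card α).choose k ^ (2 * k).choose k := by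
  calc #{M : Finset (Finset α) | IsMaximalIntersecting k M}
      ≤ #((Fintype.piFinset fun _ : Fin ((2 * k).choose k) ↦ powersetCard k univ).image
          fun c ↦ transversals k (univ.image c)) := card_le_card fun M hM ↦ by
        obtain ⟨c, hc, rfl⟩ := (mem_filter.1 hM).2.exists_transversals_eq hk hcard
        exact mem_image_of_mem _ (Fintype.mem_piFinset.2 fun i ↦ mem_powersetCard_univ.2 (hc i))
    _ ≤ #(Fintype.piFinset fun _ : Fin ((2 * k).choose k) ↦ powersetCard k (univ : Finset α)) :=
        card_image_le
    _ = (Fintype.card α).choose k ^ (2 * k).choose k := by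
        simp [Fintype.card_piFinset, card_powersetCard]

end MaximalIntersecting

section RandomSubset

variable {α ι : Type*} {ground : Finset α} {p : ℝ} {P : Finset α → Prop}

lemma randomSubsetProb_add_not (ground : Finset α) (p : ℝ) (P : Finset α → Prop) :
    randomSubsetProb ground p P + randomSubsetProb ground p (fun W ↦ ¬P W) = 1 := by
  rw [randomSubsetProb, randomSubsetProb, ← sum_add_distrib]
  calc _ = ∑ W ∈ ground.powerset, p ^ #W * (1 - p) ^ (#ground - #W) :=
        sum_congr rfl fun W _ ↦ by by_cases hP : P W <;> simp [hP]
    _ = 1 := by rw [sum_pow_mul_eq_add_pow, add_sub_cancel, one_pow]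

lemma randomSubsetProb_le_sum_mul (hp0 : 0 ≤ p) (hp1 : p ≤ 1) {f : Finset α → ℝ}
    (hf : ∀ W, 0 ≤ f W) (hPf : ∀ W ⊆ ground, P W → 1 ≤ f W) :
    randomSubsetProb ground p P ≤
      ∑ W ∈ ground.powerset, p ^ #W * (1 - p) ^ (#ground - #W) * f W := by
  refine sum_le_sum fun W hW ↦ ?_
  have hweight : 0 ≤ p ^ #W * (1 - p) ^ (#ground - #W) :=
    mul_nonneg (pow_nonneg hp0 _) (pow_nonneg (sub_nonneg.2 hp1) _)
  split_ifs with hP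
  · exact le_mul_of_one_le_right hweight (hPf W (mem_powerset.1 hW) hP)
  · exact mul_nonneg hweight (hf W)

lemma one_sub_sum_le_randomSubsetProb (hp0 : 0 ≤ p) (hp1 : p ≤ 1) {I : Finset ι}
    {Q : ι → Finset α → Prop} (hcover : ∀ W ⊆ ground, ¬P W → ∃ i ∈ I, Q i W) :
    1 - ∑ i ∈ I, randomSubsetProb ground p (Q i) ≤ randomSubsetProb ground p P := by
  classical
  have hunion : randomSubsetProb ground p (fun W ↦ ¬P W) ≤
      ∑ i ∈ I, randomSubsetProb ground p (Q i) := by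
    refine (randomSubsetProb_le_sum_mul hp0 hp1 (f := fun W ↦ ∑ i ∈ I, if Q i W then 1 else 0)
      (fun W ↦ sum_nonneg fun i _ ↦ ite_nonneg zero_le_one le_rfl) fun W hW hPW ↦ ?_).trans_eq ?_
    · obtain ⟨i, hi, hQ⟩ := hcover W hW hPW
      calc (1 : ℝ) = if Q i W then 1 else 0 := (if_pos hQ).symm
        _ ≤ ∑ i ∈ I, if Q i W then 1 else 0 :=
          single_le_sum (f := fun i ↦ if Q i W then (1 : ℝ) else 0)
            (fun i _ ↦ ite_nonneg zero_le_one le_rfl) hi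
    · simp only [randomSubsetProb, mul_sum, mul_ite, mul_one, mul_zero]
      exact sum_comm
  linarith [randomSubsetProb_add_not ground p P]

lemma sum_mul_prod_le_exp (ground : Finset α) (hp0 : 0 ≤ p) (hp1 : p ≤ 1)
    {g : α → ℝ} (hg : ∀ x, 0 ≤ g x) :
    ∑ W ∈ ground.powerset, p ^ #W * (1 - p) ^ (#ground - #W) * ∏ x ∈ W, g x ≤
      Real.exp (p * ∑ x ∈ ground, (g x - 1)) := by
  classical
  calc ∑ W ∈ ground.powerset, p ^ #W * (1 - p) ^ (#ground - #W) * ∏ x ∈ W, g x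
      = ∏ x ∈ ground, (p * g x + (1 - p)) := by
        rw [prod_add]
        refine sum_congr rfl fun W hW ↦ ?_
        rw [prod_mul_distrib, prod_const, prod_const, card_sdiff_of_subset (mem_powerset.1 hW)]
        ring
    _ ≤ ∏ x ∈ ground, Real.exp (p * (g x - 1)) := by
        refine prod_le_prod (fun x _ ↦ ?_) fun x _ ↦ ?_
        · linarith [mul_nonneg hp0 (hg x)]
        · linarith [Real.add_one_le_exp (p * (g x - 1))]
    _ = Real.exp (p * ∑ x ∈ ground, (g x - 1)) := by rw [← Real.exp_sum, mul_sum]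

lemma exists_one_le_mul_sub_one_add_mul_inv_sub_one_le {m M d : ℝ} (hm : 0 ≤ m) (hd : 0 < d)
    (hmM : m + d ≤ M) : ∃ u, 1 ≤ u ∧ m * (u - 1) + M * (u⁻¹ - 1) ≤ -(d ^ 2 / (4 * M)) := by
  obtain ⟨N, rfl⟩ : ∃ N, M = N + d / 2 := ⟨M - d / 2, by ring⟩
  have hN : 0 < N := by linarith
  refine ⟨(N + d / 2) / N, (one_le_div hN).2 (by linarith), ?_⟩
  calc m * ((N + d / 2) / N - 1) + (N + d / 2) * (((N + d / 2) / N)⁻¹ - 1)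
      = m * (d / 2 / N) - d / 2 := by
        field_simp
        ring
    _ ≤ (N - d / 2) * (d / 2 / N) - d / 2 := by
        gcongr
        linarith
    _ = -(d ^ 2 / (4 * N)) := by
        field_simp
        ring
    _ ≤ -(d ^ 2 / (4 * (N + d / 2))) := by
        gcongr
        linarith

/-- Markov's inequality for `u ^ (#(W ∩ F) - #(W ∩ S))`, with the base `u` optimised to second
order. -/
theorem randomSubsetProb_card_inter_le_card_inter_le [DecidableEq α] {F S : Finset α}
    (hF : F ⊆ ground) (hS : S ⊆ ground) (hp0 : 0 ≤ p) (hp1 : p ≤ 1) {d : ℝ} (hd : 0 < d)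
    (hFS : #F + d ≤ #S) : randomSubsetProb ground p (fun W ↦ #(W ∩ S) ≤ #(W ∩ F)) ≤
      Real.exp (-(p * (d ^ 2 / (4 * #S)))) := by
  have hFS' : (#(F \ S) : ℝ) + d ≤ #(S \ F) := by
    have h1 : (#(F \ S) : ℝ) + #(F ∩ S) = #F := mod_cast card_sdiff_add_card_inter F S
    have h2 : (#(S \ F) : ℝ) + #(F ∩ S) = #S := by
      rw [inter_comm]
      exact_mod_cast card_sdiff_add_card_inter S F
    linarith
  obtain ⟨u, hu1, hu⟩ :=
    exists_one_le_mul_sub_one_add_mul_inv_sub_one_le (Nat.cast_nonneg _) hd hFS'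
  set g : α → ℝ := fun x ↦ (if x ∈ F then u else 1) * (if x ∈ S then u⁻¹ else 1) with hg
  have hg0 : ∀ x, 0 ≤ g x := fun x ↦ by
    simp only [hg]
    positivity
  have hprod : ∀ W, #(W ∩ S) ≤ #(W ∩ F) → 1 ≤ ∏ x ∈ W, g x := fun W hW ↦ by
    rw [prod_mul_distrib, prod_ite_mem, prod_ite_mem, prod_const, prod_const, inv_pow,
      ← div_eq_mul_inv, one_le_div (by positivity)]
    exact pow_le_pow_right₀ hu1 hW
  have hsum : ∑ x ∈ ground, (g x - 1) = #(F \ S) * (u - 1) + #(S \ F) * (u⁻¹ - 1) := by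
    have hpoint : ∀ x, g x - 1 =
        (if x ∈ F \ S then u - 1 else 0) + (if x ∈ S \ F then u⁻¹ - 1 else 0) := fun x ↦ by
      by_cases hxF : x ∈ F <;> by_cases hxS : x ∈ S <;>
        simp [hg, hxF, hxS, (zero_lt_one.trans_le hu1).ne']
    rw [sum_congr rfl fun x _ ↦ hpoint x, sum_add_distrib, sum_ite_mem, sum_ite_mem, sum_const,
      sum_const, inter_eq_right.2 (sdiff_subset.trans hF), inter_eq_right.2 (sdiff_subset.trans hS),
      nsmul_eq_mul, nsmul_eq_mul]
  calc randomSubsetProb ground p (fun W ↦ #(W ∩ S) ≤ #(W ∩ F))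
      ≤ ∑ W ∈ ground.powerset, p ^ #W * (1 - p) ^ (#ground - #W) * ∏ x ∈ W, g x :=
        randomSubsetProb_le_sum_mul hp0 hp1 (fun W ↦ prod_nonneg fun x _ ↦ hg0 x)
          fun W _ ↦ hprod W
    _ ≤ Real.exp (p * ∑ x ∈ ground, (g x - 1)) := sum_mul_prod_le_exp ground hp0 hp1 hg0
    _ ≤ Real.exp (-(p * (d ^ 2 / (4 * #(S \ F))))) := by
        rw [hsum, ← mul_neg]
        gcongr
    _ ≤ Real.exp (-(p * (d ^ 2 / (4 * #S)))) := by
        have hpos : (0 : ℝ) < #(S \ F) := by linarith [(#(F \ S)).cast_nonneg (α := ℝ)]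
        gcongr
        exact sdiff_subset

end RandomSubset

section MaximumIntersecting

variable {α : Type*} [Fintype α] [DecidableEq α] {k : ℕ} {p : ℝ}

/-- The full star at `v`: all `k`-sets containing `v`. It is the largest trivial intersecting
`k`-uniform family. -/
def fullStar (k : ℕ) (v : α) : Finset (Finset α) :=
  {e ∈ powersetCard k univ | {v} ⊆ e}

lemma card_fullStar (hk : 0 < k) (v : α) :
    #(fullStar k v) = (Fintype.card α - 1).choose (k - 1) := by
  rw [fullStar, card_filter_powersetCard_subset _ _ _ (subset_univ _)
    (by rwa [card_singleton]), card_univ, card_singleton]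

lemma intersecting_fullStar (k : ℕ) (v : α) :
    (fullStar k v : Set (Finset α)).Intersecting := fun _ he _ hf ↦
  not_disjoint_iff.2 ⟨v, singleton_subset_iff.1 (mem_filter.1 he).2,
    singleton_subset_iff.1 (mem_filter.1 hf).2⟩

lemma exists_isMaximalIntersecting_card_inter_fullStar_le {W F : Finset (Finset α)}
    (hW : W ⊆ powersetCard k univ) (hFW : F ⊆ W) (hint : (F : Set (Finset α)).Intersecting)
    (hmax : ∀ G ⊆ W, (G : Set (Finset α)).Intersecting → #G ≤ #F)
    (hnt : ∀ v, ∃ e ∈ F, v ∉ e) (v : α) :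
    ∃ M, IsMaximalIntersecting k M ∧ (∀ w, ∃ e ∈ M, w ∉ e) ∧ #(W ∩ fullStar k v) ≤ #(W ∩ M) := by
  obtain ⟨M, hFM, hM⟩ :=
    exists_isMaximalIntersecting (subset_powersetCard_univ_iff.1 (hFW.trans hW)) hint
  refine ⟨M, hM, fun w ↦ (hnt w).imp fun e he ↦ ⟨hFM he.1, he.2⟩, ?_⟩
  calc #(W ∩ fullStar k v) ≤ #F := hmax _ inter_subset_left
        ((intersecting_fullStar k v).mono (coe_subset.2 inter_subset_right))
    _ ≤ #(W ∩ M) := card_le_card (subset_inter hFW hFM)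

lemma randomSubsetProb_card_inter_fullStar_le (hk : 2 ≤ k)
    (hcard : 2 * k < Fintype.card α) (hp0 : 0 ≤ p) (hp1 : p ≤ 1) {M : Finset (Finset α)}
    (hM : IsMaximalIntersecting k M) (hnt : ∀ v, ∃ e ∈ M, v ∉ e) (v : α) :
    randomSubsetProb (powersetCard k univ) p (fun W ↦ #(W ∩ fullStar k v) ≤ #(W ∩ M)) ≤
      Real.exp (-(p * (((Fintype.card α - k - 1).choose (k - 1) - 1 : ℝ) ^ 2 /
        (4 * (Fintype.card α - 1).choose (k - 1))))) := by
  have : Nonempty α := ⟨v⟩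
  have hgap := card_add_choose_le_of_intersecting_nontrivial hcard.le hM.prop.1 hM.prop.2 hnt
  have hD : 1 < (Fintype.card α - k - 1).choose (k - 1) :=
    calc 1 < k := hk
      _ = k.choose (k - 1) := by rw [Nat.choose_symm (by omega), Nat.choose_one_right]
      _ ≤ _ := Nat.choose_le_choose _ (by omega)
  have hgap' : #M + ((Fintype.card α - k - 1).choose (k - 1) - 1 : ℝ) ≤ #(fullStar k v) := by
    rw [card_fullStar (by omega), ← add_sub_assoc, sub_le_iff_le_add]
    exact_mod_cast hgap
  rw [← card_fullStar (by omega) v]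
  exact randomSubsetProb_card_inter_le_card_inter_le (subset_powersetCard_univ_iff.2 hM.prop.1)
    (filter_subset _ _) hp0 hp1 (sub_pos.2 (mod_cast hD)) hgap'

theorem one_sub_choose_pow_mul_exp_le_randomSubsetProb (hk : 2 ≤ k)
    (hcard : 2 * k < Fintype.card α) (hp0 : 0 ≤ p) (hp1 : p ≤ 1) :
    1 - ((Fintype.card α).choose k : ℝ) ^ (2 * k).choose k *
        Real.exp (-(p * (((Fintype.card α - k - 1).choose (k - 1) - 1 : ℝ) ^ 2 /
          (4 * (Fintype.card α - 1).choose (k - 1))))) ≤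
      randomSubsetProb (powersetCard k (univ : Finset α)) p
        (fun W ↦ ∀ F ⊆ W, (F : Set (Finset α)).Intersecting →
          (∀ G ⊆ W, (G : Set (Finset α)).Intersecting → #G ≤ #F) → ∃ v, ∀ e ∈ F, v ∈ e) := by
  classical
  obtain ⟨v⟩ : Nonempty α := Fintype.card_pos_iff.1 (by omega)
  set β := Real.exp (-(p * (((Fintype.card α - k - 1).choose (k - 1) - 1 : ℝ) ^ 2 /
    (4 * (Fintype.card α - 1).choose (k - 1)))))
  set I : Finset (Finset (Finset α)) := {M | IsMaximalIntersecting k M ∧ ∀ v, ∃ e ∈ M, v ∉ e}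
  have hcount : #I ≤ (Fintype.card α).choose k ^ (2 * k).choose k :=
    (card_le_card (monotone_filter_right _ fun _ _ hM ↦ hM.1)).trans
      (card_isMaximalIntersecting_le (by omega) hcard.le)
  have hsum : ∑ M ∈ I, randomSubsetProb (powersetCard k univ) p
      (fun W ↦ #(W ∩ fullStar k v) ≤ #(W ∩ M)) ≤
      ((Fintype.card α).choose k : ℝ) ^ (2 * k).choose k * β :=
    calc _ ≤ #I * β := by
          rw [← nsmul_eq_mul]
          exact sum_le_card_nsmul _ _ _ fun M hM ↦ randomSubsetProb_card_inter_fullStar_le hk hcard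
            hp0 hp1 (mem_filter.1 hM).2.1 (mem_filter.1 hM).2.2 v
      _ ≤ _ := mul_le_mul_of_nonneg_right (mod_cast hcount) (Real.exp_pos _).le
  refine (sub_le_sub_left hsum 1).trans (one_sub_sum_le_randomSubsetProb hp0 hp1 ?_)
  intro W hW hbad
  push Not at hbad
  obtain ⟨F, hFW, hint, hmax, hnt⟩ := hbad
  obtain ⟨M, hM, hMnt, hle⟩ :=
    exists_isMaximalIntersecting_card_inter_fullStar_le hW hFW hint hmax hnt v
  exact ⟨M, mem_filter.2 ⟨mem_univ M, hM, hMnt⟩, hle⟩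

end MaximumIntersecting

section Estimates

variable {n k : ℕ}

lemma choose_le_exp_mul_log (hk : 0 < k) (hn : 0 < n) :
    (n.choose k : ℝ) ≤ Real.exp (k * Real.log (n * Real.exp 1 / k)) := by
  have hk' : (0 : ℝ) < k := mod_cast hk
  have : (0 : ℝ) < n := mod_cast hn
  calc (n.choose k : ℝ) ≤ (n : ℝ) ^ k / k.factorial := Nat.choose_le_pow_div k n
    _ = ((n : ℝ) / k) ^ k * ((k : ℝ) ^ k / k.factorial) := by
        rw [div_pow]
        field_simp
    _ ≤ ((n : ℝ) / k) ^ k * Real.exp k := by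
        gcongr
        exact Real.pow_div_factorial_le_exp _ hk'.le k
    _ = Real.exp (k * Real.log (n * Real.exp 1 / k)) := by
        rw [Real.exp_nat_mul, Real.exp_log (by positivity), mul_div_right_comm, mul_pow,
          ← Real.exp_nat_mul, mul_one]

lemma log_mul_exp_one_div (hk : 0 < k) (hn : 0 < n) :
    Real.log (n * Real.exp 1 / k) = Real.log n + 1 - Real.log k := by
  have hk' : (k : ℝ) ≠ 0 := mod_cast hk.ne'
  have hn' : (n : ℝ) ≠ 0 := mod_cast hn.ne'
  rw [Real.log_div (by positivity) hk', Real.log_mul hn' (Real.exp_ne_zero 1), Real.log_exp]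

lemma log_le_mul_log_mul_exp_one_div (hk : 0 < k) (hkn : k ≤ n) :
    Real.log n ≤ k * Real.log (n * Real.exp 1 / k) := by
  have hk' : (1 : ℝ) ≤ k := mod_cast hk
  have hlog : Real.log k ≤ Real.log n := Real.log_le_log (by positivity) (mod_cast hkn)
  have hlogk : Real.log k ≤ k - 1 := Real.log_le_sub_one_of_pos (by positivity)
  rw [log_mul_exp_one_div hk (hk.trans_le hkn)]
  nlinarith

lemma mul_choose_pred_eq (hk : 0 < k) (hn : 0 < n) :
    n * (n - 1).choose (k - 1) = k * n.choose k := by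
  have h := Nat.add_one_mul_choose_eq (n - 1) (k - 1)
  rwa [Nat.sub_add_cancel hk, Nat.sub_add_cancel hn, mul_comm (n.choose k)] at h

lemma three_le_choose_pred (hk : 2 ≤ k) (hkn : 2 * k < n) (hn : 6 ≤ n) :
    3 ≤ (n - k - 1).choose (k - 1) := by
  obtain rfl | hk := hk.eq_or_lt
  · rw [Nat.choose_one_right]
    omega
  · calc 3 ≤ k := hk
      _ = k.choose (k - 1) := by rw [Nat.choose_symm (by omega), Nat.choose_one_right]
      _ ≤ (n - k - 1).choose (k - 1) := Nat.choose_le_choose _ (by omega)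

lemma two_thirds_mul_le_choose_pred_sub_one (hk : 2 ≤ k) (hkn : 2 * k < n) (hn : 6 ≤ n) :
    2 / 3 * (k * (n - k).choose k / n : ℝ) ≤ (n - k - 1).choose (k - 1) - 1 := by
  have hD : (k * (n - k).choose k / n : ℝ) ≤ (n - k - 1).choose (k - 1) := by
    rw [div_le_iff₀' (mod_cast (by omega : 0 < n)), ← Nat.cast_mul, ← Nat.cast_mul,
      ← mul_choose_pred_eq (by omega) (by omega)]
    exact_mod_cast Nat.mul_le_mul_right _ (Nat.sub_le n k)
  have hD3 : (3 : ℝ) ≤ (n - k - 1).choose (k - 1) := mod_cast three_le_choose_pred hk hkn hn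
  linarith

/-- The edge probability `p₀(n, k)` of the theorem. -/
noncomputable def ekrThreshold (n k : ℕ) : ℝ :=
  9 * (n : ℝ) * Real.logb 2 ((n : ℝ) * Real.exp 1 / (k : ℝ)) *
    ((2 * k).choose k : ℝ) * (n.choose k : ℝ) / ((n - k).choose k : ℝ) ^ 2

lemma ekrThreshold_nonneg (hk : 0 < k) (hkn : k ≤ n) : 0 ≤ ekrThreshold n k := by
  have hL : 0 ≤ Real.log (n * Real.exp 1 / k) := nonneg_of_mul_nonneg_right
    ((Real.log_natCast_nonneg n).trans (log_le_mul_log_mul_exp_one_div hk hkn)) (mod_cast hk)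
  rw [ekrThreshold, Real.logb]
  positivity

/-- The gap `D - 1` of the Hilton–Milner theorem is at least `2D/3`, and `D ≥ (k/n) binom(n-k, k)`,
while the star has `(k/n) binom(n, k)` edges. -/
lemma four_thirds_mul_le_exponent {p : ℝ} (hk : 2 ≤ k) (hkn : 2 * k < n) (hn : 6 ≤ n)
    (hp : ekrThreshold n k ≤ p) :
    4 / 3 * ((2 * k).choose k * (k * Real.log (n * Real.exp 1 / k))) ≤
      p * (((n - k - 1).choose (k - 1) - 1 : ℝ) ^ 2 / (4 * (n - 1).choose (k - 1))) := by
  have hn0 : (0 : ℝ) < n := mod_cast (by omega : 0 < n)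
  have hk0 : (0 : ℝ) < k := mod_cast (by omega : 0 < k)
  have hL : 0 ≤ k * Real.log (n * Real.exp 1 / k) :=
    (Real.log_natCast_nonneg n).trans (log_le_mul_log_mul_exp_one_div (by omega) (by omega))
  have hp0 : 0 ≤ p := (ekrThreshold_nonneg (by omega) (by omega)).trans hp
  have hq : (0 : ℝ) < (n - k).choose k := mod_cast Nat.choose_pos (by omega)
  have hM : (0 : ℝ) < n.choose k := mod_cast Nat.choose_pos (by omega)
  have hs : ((n - 1).choose (k - 1) : ℝ) = k * n.choose k / n := by
    rw [eq_div_iff hn0.ne', mul_comm]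
    exact_mod_cast mul_choose_pred_eq (by omega) (by omega)
  have hgap := two_thirds_mul_le_choose_pred_sub_one hk hkn hn
  have hlog2 : 4 / 3 ≤ (Real.log 2)⁻¹ := by
    rw [le_inv_comm₀ (by norm_num) (Real.log_pos one_lt_two)]
    linarith [Real.log_two_lt_d9]
  rw [ekrThreshold, Real.logb] at hp
  calc 4 / 3 * ((2 * k).choose k * (k * Real.log (n * Real.exp 1 / k)))
      ≤ (Real.log 2)⁻¹ * ((2 * k).choose k * (k * Real.log (n * Real.exp 1 / k))) := by gcongr
    _ = 9 * n * (Real.log (n * Real.exp 1 / k) / Real.log 2) * (2 * k).choose k * n.choose k /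
          ((n - k).choose k : ℝ) ^ 2 *
          ((2 / 3 * (k * (n - k).choose k / n)) ^ 2 / (4 * (n - 1).choose (k - 1))) := by
        rw [hs]
        field_simp
        ring
    _ ≤ _ := by gcongr

lemma choose_pow_mul_exp_le_inv {p : ℝ} (hk : 2 ≤ k) (hkn : 2 * k < n) (hn : 6 ≤ n)
    (hp : ekrThreshold n k ≤ p) :
    (n.choose k : ℝ) ^ (2 * k).choose k *
        Real.exp (-(p * (((n - k - 1).choose (k - 1) - 1 : ℝ) ^ 2 /
          (4 * (n - 1).choose (k - 1))))) ≤ (n : ℝ)⁻¹ := by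
  have hexponent := four_thirds_mul_le_exponent hk hkn hn hp
  have hlog := log_le_mul_log_mul_exp_one_div (n := n) (k := k) (by omega) (by omega)
  set X := p * (((n - k - 1).choose (k - 1) - 1 : ℝ) ^ 2 / (4 * (n - 1).choose (k - 1)))
  set L := Real.log (n * Real.exp 1 / k)
  have hb : (3 : ℝ) ≤ (2 * k).choose k := by
    have : 2 * k ≤ (2 * k).choose k := by
      simpa [Nat.centralBinom] using Nat.choose_le_centralBinom 1 k
    exact_mod_cast (by omega : 3 ≤ (2 * k).choose k)
  have hbL : 3 * (k * L) ≤ (2 * k).choose k * (k * L) :=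
    mul_le_mul_of_nonneg_right hb ((Real.log_natCast_nonneg n).trans hlog)
  calc (n.choose k : ℝ) ^ (2 * k).choose k * Real.exp (-X)
      ≤ Real.exp (k * L) ^ (2 * k).choose k * Real.exp (-X) := by
        gcongr
        exact choose_le_exp_mul_log (by omega) (by omega)
    _ = Real.exp ((2 * k).choose k * (k * L) - X) := by
        rw [← Real.exp_nat_mul, ← Real.exp_add, sub_eq_add_neg]
    _ ≤ Real.exp (-Real.log n) := Real.exp_le_exp.2 (by linarith)
    _ = (n : ℝ)⁻¹ := by
        rw [Real.exp_neg, Real.exp_log (by exact_mod_cast (by omega : 0 < n))]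

end Estimates

lemma isIntersectingHyp_iff {n : ℕ} {H : Finset (Finset (Fin n))} :
    IsIntersectingHyp n H ↔ (H : Set (Finset (Fin n))).Intersecting :=
  forall₄_congr fun _ _ _ _ ↦ not_disjoint_iff_nonempty_inter.symm

theorem sparse_Erdos_Ko_Rado_general {n k : ℕ} (hk : 2 ≤ k) (hkn : 2 * k < n) (hn : 6 ≤ n) {p : ℝ}
    (hp : ekrThreshold n k ≤ p) (hp1 : p ≤ 1) :
    1 - (n : ℝ)⁻¹ ≤ randomSubsetProb ((Finset.univ : Finset (Fin n)).powersetCard k) p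
      (fun W => ∀ F ⊆ W, IsIntersectingHyp n F →
        (∀ G ⊆ W, IsIntersectingHyp n G → G.card ≤ F.card) → IsTrivialIntHyp n F) := by
  have h := one_sub_choose_pow_mul_exp_le_randomSubsetProb (α := Fin n) hk (by simpa using hkn)
    ((ekrThreshold_nonneg (by omega) (by omega)).trans hp) hp1
  simp only [Fintype.card_fin, ← isIntersectingHyp_iff] at h
  exact (sub_le_sub_left (choose_pow_mul_exp_le_inv hk hkn hn hp) 1).trans h

theorem sparse_Erdos_Ko_Rado (ε : ℝ) (hε : 0 < ε) :
    ∃ n₀ : ℕ, ∀ n : ℕ, n₀ ≤ n → ∀ k : ℕ, 3 ≤ k → 4 * k ≤ n → ∀ p : ℝ,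
      9 * (n : ℝ) * Real.logb 2 ((n : ℝ) * Real.exp 1 / (k : ℝ)) *
          ((2 * k).choose k : ℝ) * (n.choose k : ℝ) / ((n - k).choose k : ℝ) ^ 2 ≤ p →
      p ≤ 1 →
      1 - ε ≤ randomSubsetProb
        ((Finset.univ : Finset (Fin n)).powersetCard k) p
        (fun W => ∀ F ⊆ W, IsIntersectingHyp n F →
          (∀ G ⊆ W, IsIntersectingHyp n G → G.card ≤ F.card) →
          IsTrivialIntHyp n F) := by
  obtain ⟨n₀, hn₀⟩ := exists_nat_gt ε⁻¹
  refine ⟨n₀, fun n hn k hk hkn p hp hp1 ↦ ?_⟩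
  have hinv : (n : ℝ)⁻¹ ≤ ε := inv_le_of_inv_le₀ hε (hn₀.le.trans (mod_cast hn))
  exact (sub_le_sub_left hinv 1).trans
    (sparse_Erdos_Ko_Rado_general (by omega) (by omega) (by omega) hp hp1)
end

section
/- Let ε > 0 and let n, k be integers with 2 ≤ k ≤ (n−1)/2. Set N = binom(n,k) and D = binom(n−k,k). Then every set S of vertices of the Kneser graph KG(n,k) with |S| ≥ (1+ε)·binom(n−1,k−1) induces at least (1 − 1/(1+ε))·(D·n/(N·(n−k)))·binom(|S|,2) edges. -/
/-- The number of edges of the Kneser graph `KG(n,k)` induced by a set `S` of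
`k`-element subsets of `[n]`: the number of pairs `{F₁, F₂} ⊆ S` with
`F₁ ∩ F₂ = ∅`. -/
def kneserInducedEdges (n : ℕ) (S : Finset (Finset (Fin n))) : ℕ :=
  ((S.powersetCard 2).filter
    (fun P => ∀ x ∈ P, ∀ y ∈ P, x = y ∨ x ∩ y = ∅)).card

/-!
The up operator `U` of the Boolean lattice of subsets of an `n`-set and its adjoint satisfy
`U* U = U U* + (n - 2j)` on level `j`, whence by induction on `j` one has
`‖U f‖² ≤ j (n - j - 1) ‖f‖²` for every `f` of mean zero on level `j`. For `f` of mean zero on the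
`k`-subsets, summing `f` over the `k`-subsets of larger and larger sets amounts, up to scalars, to
applying `U` repeatedly. On level `n - k`, identified with level `k` by complementation, this sum is
the adjacency operator of the Kneser graph, which therefore has norm at most `C(n-k-1, k-1)` on
functions of mean zero. Applied to the indicator function of `S` minus its mean, this gives the
Hoffman bound: `S` induces at least `R |S| (|S| - C(n-1, k-1)) / 2` edges, where
`R = D n / (N (n - k))`.
-/

theorem choose_mul_choose_mul_eq (k i m : ℕ) :
    (k + i).choose k * (k + 1 + i) * (m.choose i * (m - i)) =
      (i + 1) ^ 2 * ((k + (i + 1)).choose k * m.choose (i + 1)) := by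
  have hleft : (k + i).choose k * (k + 1 + i) = (k + (i + 1)).choose k * (i + 1) := by
    have h := Nat.choose_mul_succ_eq (k + i) k
    rw [show k + i + 1 - k = i + 1 by omega] at h
    rwa [add_right_comm k 1 i]
  rw [hleft, ← Nat.choose_succ_right_eq]
  ring

theorem mul_choose_sub_one_sub_one (n : ℕ) {k : ℕ} (hk : 1 ≤ k) :
    n * (n - 1).choose (k - 1) = n.choose k * k := by
  obtain ⟨k, rfl⟩ := Nat.exists_eq_add_of_le' hk
  cases n with
  | zero => simp
  | succ n => exact Nat.add_one_mul_choose_eq n k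

section

open Finset

variable {α R : Type*}

/-- The inclusion operator from level `k` of the lattice of finite subsets of `α`: its value at `X`
is the sum of `f` over the `k`-subsets of `X`. Since `Y ⊆ Xᶜ` means that `X` and `Y` are disjoint,
`X ↦ inclusionSum k f Xᶜ` is the adjacency operator of the Kneser graph. -/
def inclusionSum [AddCommMonoid R] (k : ℕ) (f : Finset α → R) (X : Finset α) : R :=
  ∑ Y ∈ X.powersetCard k, f Y

theorem inclusionSum_card [AddCommMonoid R] (f : Finset α → R) (X : Finset α) :
    inclusionSum #X f X = f X := by
  rw [inclusionSum, powersetCard_self, sum_singleton]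

variable [DecidableEq α]

/-- The up operator of the lattice of finite subsets of `α`, acting on all levels at once. -/
def upSum [AddCommMonoid R] (f : Finset α → R) (X : Finset α) : R :=
  ∑ x ∈ X, f (X.erase x)

theorem upSum_inclusionSum [CommRing R] (k : ℕ) (f : Finset α → R) (X : Finset α) :
    upSum (inclusionSum k f) X = ((#X : R) - k) * inclusionSum k f X := by
  unfold upSum inclusionSum
  rw [mul_sum, sum_comm' (t' := X.powersetCard k) (s' := fun Y ↦ X \ Y)]
  · refine sum_congr rfl fun Y hY ↦ ?_
    obtain ⟨hYX, hYk⟩ := mem_powersetCard.1 hY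
    rw [sum_const, nsmul_eq_mul, card_sdiff_of_subset hYX, Nat.cast_sub (card_le_card hYX), hYk]
  · intro x Y
    simp only [mem_powersetCard, mem_sdiff, subset_erase]
    tauto

variable [Fintype α]

/-- The down operator of the lattice of subsets of `α`, acting on all levels at once. -/
def downSum [AddCommMonoid R] (f : Finset α → R) (X : Finset α) : R :=
  ∑ x ∈ Xᶜ, f (insert x X)

theorem sum_upSum_mul [NonUnitalNonAssocSemiring R] (f g : Finset α → R) (j : ℕ) :
    ∑ X ∈ powersetCard (j + 1) univ, upSum f X * g X =
      ∑ Y ∈ powersetCard j univ, f Y * downSum g Y := by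
  simp only [upSum, downSum, sum_mul, mul_sum]
  rw [sum_sigma', sum_sigma']
  refine sum_bij' (fun p _ ↦ ⟨p.1.erase p.2, p.2⟩) (fun p _ ↦ ⟨insert p.2 p.1, p.2⟩) ?_ ?_ ?_ ?_ ?_
  all_goals
    rintro ⟨X, x⟩ h
    simp only [mem_sigma, mem_powersetCard_univ, mem_compl] at h
  · simp [card_erase_of_mem h.2, h.1]
  · simp [card_insert_of_notMem h.2, h.1]
  · simp [insert_erase h.2]
  · simp [erase_insert h.2]
  · simp [insert_erase h.2]

theorem downSum_upSum [CommRing R] (f : Finset α → R) (X : Finset α) :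
    downSum (upSum f) X = upSum (downSum f) X + ((Fintype.card α : R) - 2 * #X) * f X := by
  have hdown : downSum (upSum f) X = ∑ x ∈ Xᶜ, (f X + ∑ y ∈ X, f (insert x (X.erase y))) := by
    refine sum_congr rfl fun x hx ↦ ?_
    rw [mem_compl] at hx
    rw [upSum, sum_insert hx, erase_insert hx]
    congr! 3 with y hy
    exact erase_insert_of_ne fun h ↦ hx (h ▸ hy)
  have hup : upSum (downSum f) X = ∑ y ∈ X, (f X + ∑ x ∈ Xᶜ, f (insert x (X.erase y))) := by
    refine sum_congr rfl fun y hy ↦ ?_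
    rw [downSum, compl_erase, sum_insert (by simpa using hy), insert_erase hy]
  rw [hdown, hup, sum_add_distrib, sum_add_distrib, sum_comm, sum_const, sum_const, nsmul_eq_mul,
    nsmul_eq_mul, card_compl, Nat.cast_sub (card_le_univ X)]
  ring

theorem sum_upSum [CommRing R] (f : Finset α → R) (j : ℕ) :
    ∑ X ∈ powersetCard (j + 1) univ, upSum f X =
      ((Fintype.card α : R) - j) * ∑ Y ∈ powersetCard j univ, f Y := by
  have h := sum_upSum_mul f (fun _ ↦ 1) j
  simp only [mul_one] at h
  rw [h, mul_sum]
  refine sum_congr rfl fun Y hY ↦ ?_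
  rw [downSum, sum_const, nsmul_one, card_compl, Nat.cast_sub (card_le_univ Y),
    mem_powersetCard_univ.1 hY, mul_comm]

theorem sum_downSum [NonAssocSemiring R] (f : Finset α → R) (j : ℕ) :
    ∑ X ∈ powersetCard j univ, downSum f X =
      ((j : R) + 1) * ∑ Y ∈ powersetCard (j + 1) univ, f Y := by
  have h := sum_upSum_mul (fun _ ↦ 1) f j
  simp only [one_mul] at h
  rw [← h, mul_sum]
  refine sum_congr rfl fun Y hY ↦ ?_
  rw [upSum, sum_const, nsmul_one, mem_powersetCard_univ.1 hY, Nat.cast_succ]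

theorem sum_upSum_sq [CommRing R] (f : Finset α → R) (j : ℕ) :
    ∑ X ∈ powersetCard (j + 2) univ, upSum f X ^ 2 =
      ∑ X ∈ powersetCard j univ, downSum f X ^ 2 +
        ((Fintype.card α : R) - 2 * (j + 1)) * ∑ X ∈ powersetCard (j + 1) univ, f X ^ 2 := by
  simp only [pow_two]
  rw [sum_upSum_mul f (upSum f) (j + 1), ← sum_upSum_mul (downSum f) f j, mul_sum,
    ← sum_add_distrib]
  refine sum_congr rfl fun X hX ↦ ?_
  rw [downSum_upSum, mem_powersetCard_univ.1 hX]
  push_cast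
  ring

theorem sum_compl_powersetCard [AddCommMonoid R] {k : ℕ} (hk : k ≤ Fintype.card α)
    (g : Finset α → R) :
    ∑ X ∈ powersetCard k univ, g Xᶜ = ∑ X ∈ powersetCard (Fintype.card α - k) univ, g X := by
  refine sum_nbij' compl compl ?_ ?_ (by simp) (by simp) (by simp)
  all_goals
    intro X hX
    rw [mem_powersetCard_univ] at hX ⊢
    rw [card_compl]
    omega

theorem upSum_inclusionSum_of_mem [CommRing R] (k i : ℕ) (f : Finset α → R) {X : Finset α}
    (hX : X ∈ powersetCard (k + i + 1) univ) :
    upSum (inclusionSum k f) X = (i + 1) * inclusionSum k f X := by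
  rw [upSum_inclusionSum, mem_powersetCard_univ.1 hX]
  push_cast
  ring

section Order

variable [CommRing R] [LinearOrder R] [IsStrictOrderedRing R]

/-- An operator and its adjoint have the same norm. -/
theorem sum_downSum_sq_le {f : Finset α → R} {j : ℕ} {c : R} (hc : 0 ≤ c)
    (h : ∑ X ∈ powersetCard (j + 1) univ, upSum (downSum f) X ^ 2 ≤
      c * ∑ X ∈ powersetCard j univ, downSum f X ^ 2) :
    ∑ X ∈ powersetCard j univ, downSum f X ^ 2 ≤
      c * ∑ X ∈ powersetCard (j + 1) univ, f X ^ 2 := by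
  set A := ∑ X ∈ powersetCard j univ, downSum f X ^ 2
  set B := ∑ X ∈ powersetCard (j + 1) univ, f X ^ 2
  have hA : 0 ≤ A := sum_nonneg fun _ _ ↦ sq_nonneg _
  have : 0 ≤ B := sum_nonneg fun _ _ ↦ sq_nonneg _
  have hadj : ∑ X ∈ powersetCard (j + 1) univ, upSum (downSum f) X * f X = A := by
    simp only [sum_upSum_mul, A, pow_two]
  have hcs : A * A ≤ A * (c * B) := calc
    A * A = (∑ X ∈ powersetCard (j + 1) univ, upSum (downSum f) X * f X) ^ 2 := by rw [hadj, sq]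
    _ ≤ (∑ X ∈ powersetCard (j + 1) univ, upSum (downSum f) X ^ 2) * B :=
      sum_mul_sq_le_sq_mul_sq _ _ _
    _ ≤ c * A * B := by gcongr
    _ = A * (c * B) := by ring
  obtain hA0 | hApos := hA.eq_or_lt
  · rw [← hA0]
    positivity
  · exact le_of_mul_le_mul_left hcs hApos

theorem sum_upSum_sq_le_of_sum_eq_zero {j : ℕ} (hj : j < Fintype.card α) {f : Finset α → R}
    (hf : ∑ X ∈ powersetCard j univ, f X = 0) :
    ∑ X ∈ powersetCard (j + 1) univ, upSum f X ^ 2 ≤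
      j * (Fintype.card α - j - 1) * ∑ X ∈ powersetCard j univ, f X ^ 2 := by
  induction j generalizing f with
  | zero =>
    rw [powersetCard_zero, sum_singleton] at hf
    rw [Nat.cast_zero, zero_mul, zero_mul]
    refine (sum_eq_zero fun X hX ↦ ?_).le
    obtain ⟨a, rfl⟩ := card_eq_one.1 (mem_powersetCard_univ.1 hX)
    simp [upSum, hf]
  | succ j ih =>
    have hjn : (j : R) + 2 ≤ Fintype.card α := by exact_mod_cast hj
    have hc : 0 ≤ (j : R) * (Fintype.card α - j - 1) := mul_nonneg (by positivity) (by linarith)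
    have hdown := sum_downSum_sq_le hc
      (ih (by omega) (f := downSum f) (by rw [sum_downSum, hf, mul_zero]))
    calc
      _ = _ := sum_upSum_sq f j
      _ ≤ j * (Fintype.card α - j - 1) * ∑ X ∈ powersetCard (j + 1) univ, f X ^ 2 +
          (Fintype.card α - 2 * (j + 1)) * ∑ X ∈ powersetCard (j + 1) univ, f X ^ 2 := by gcongr
      _ = _ := by
        push_cast
        ring

end Order

end

section

open Finset

variable {α R : Type*} [Fintype α] [CommRing R] [LinearOrder R] [IsStrictOrderedRing R]

theorem sum_inclusionSum_eq_zero {k : ℕ} {f : Finset α → R}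
    (hf : ∑ X ∈ powersetCard k univ, f X = 0) (i : ℕ) :
    ∑ X ∈ powersetCard (k + i) univ, inclusionSum k f X = 0 := by
  classical
  induction i with
  | zero =>
    rw [← hf]
    refine sum_congr rfl fun X hX ↦ ?_
    rw [← mem_powersetCard_univ.1 hX, inclusionSum_card]
  | succ i ih =>
    have h := sum_upSum (inclusionSum k f) (k + i)
    rw [ih, mul_zero, sum_congr rfl fun X ↦ upSum_inclusionSum_of_mem k i f, ← mul_sum] at h
    exact (mul_eq_zero.1 h).resolve_left (by positivity)

theorem sq_mul_sum_inclusionSum_sq_le {k i : ℕ} (hi : k + i < Fintype.card α) {f : Finset α → R}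
    (hf : ∑ X ∈ powersetCard k univ, f X = 0) :
    ((i : R) + 1) ^ 2 * ∑ X ∈ powersetCard (k + i + 1) univ, inclusionSum k f X ^ 2 ≤
      (k + i) * (Fintype.card α - (k + i) - 1) *
        ∑ X ∈ powersetCard (k + i) univ, inclusionSum k f X ^ 2 := by
  classical
  have h := sum_upSum_sq_le_of_sum_eq_zero hi (sum_inclusionSum_eq_zero hf i)
  rw [sum_congr rfl fun X hX ↦ by rw [upSum_inclusionSum_of_mem k i f hX, mul_pow], ← mul_sum] at h
  exact_mod_cast h

theorem sum_inclusionSum_sq_le {k i : ℕ} (hi : k + 1 + i ≤ Fintype.card α) {f : Finset α → R}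
    (hf : ∑ X ∈ powersetCard (k + 1) univ, f X = 0) :
    ∑ X ∈ powersetCard (k + 1 + i) univ, inclusionSum (k + 1) f X ^ 2 ≤
      (k + i).choose k * (Fintype.card α - (k + 2)).choose i *
        ∑ X ∈ powersetCard (k + 1) univ, f X ^ 2 := by
  induction i with
  | zero =>
    simp only [add_zero, Nat.choose_self, Nat.choose_zero_right, Nat.cast_one, one_mul]
    refine (sum_congr rfl fun X hX ↦ ?_).le
    rw [← mem_powersetCard_univ.1 hX, inclusionSum_card]
  | succ i ih =>
    set m := Fintype.card α - (k + 2)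
    set Q := ∑ X ∈ powersetCard (k + 1) univ, f X ^ 2
    have hcard : (Fintype.card α : R) - ((k + 1 : ℕ) + i) - 1 = (m - i : ℕ) := by
      rw [show Fintype.card α = k + 1 + i + 1 + (m - i) by omega]
      push_cast
      ring
    have hchoose : ((k + i).choose k * (k + 1 + i) * (m.choose i * (m - i : ℕ)) : R) =
        (i + 1) ^ 2 * ((k + (i + 1)).choose k * m.choose (i + 1)) := by
      exact_mod_cast choose_mul_choose_mul_eq k i m
    refine le_of_mul_le_mul_left ?_ (by positivity : 0 < ((i : R) + 1) ^ 2)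
    calc
      _ ≤ ((k + 1 : ℕ) + i) * ((m - i : ℕ) : R) *
          ∑ X ∈ powersetCard (k + 1 + i) univ, inclusionSum (k + 1) f X ^ 2 :=
        hcard ▸ sq_mul_sum_inclusionSum_sq_le (by omega) hf
      _ ≤ ((k + 1 : ℕ) + i) * ((m - i : ℕ) : R) * ((k + i).choose k * m.choose i * Q) := by
        gcongr
        exact ih (by omega)
      _ = _ := by
        push_cast
        linear_combination Q * hchoose

end

section

open Finset

variable {α R : Type*} [Fintype α] [DecidableEq α]

theorem abs_sum_mul_inclusionSum_compl_le [CommRing R] [LinearOrder R] [IsStrictOrderedRing R]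
    {k : ℕ} (hk : 1 ≤ k) (hkn : 2 * k ≤ Fintype.card α) {f : Finset α → R}
    (hf : ∑ X ∈ powersetCard k univ, f X = 0) :
    |∑ X ∈ powersetCard k univ, f X * inclusionSum k f Xᶜ| ≤
      (Fintype.card α - k - 1).choose (k - 1) * ∑ X ∈ powersetCard k univ, f X ^ 2 := by
  obtain ⟨k, rfl⟩ := Nat.exists_eq_add_of_le' hk
  set n := Fintype.card α
  set L : R := ↑((n - (k + 1) - 1).choose (k + 1 - 1))
  set Q := ∑ X ∈ powersetCard (k + 1) univ, f X ^ 2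
  have hnorm : ∑ X ∈ powersetCard (k + 1) univ, inclusionSum (k + 1) f Xᶜ ^ 2 ≤ L * L * Q := by
    have h := sum_inclusionSum_sq_le (i := n - 2 * (k + 1)) (by omega) hf
    rw [show k + 1 + (n - 2 * (k + 1)) = n - (k + 1) by omega,
      show k + (n - 2 * (k + 1)) = n - (k + 2) by omega,
      Nat.choose_symm_of_eq_add (show n - (k + 2) = n - 2 * (k + 1) + k by omega)] at h
    rwa [sum_compl_powersetCard (by omega) fun X ↦ inclusionSum (k + 1) f X ^ 2]
  have : 0 ≤ Q := sum_nonneg fun _ _ ↦ sq_nonneg _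
  refine abs_le_of_sq_le_sq ?_ (by positivity)
  calc
    _ ≤ Q * ∑ X ∈ powersetCard (k + 1) univ, inclusionSum (k + 1) f Xᶜ ^ 2 :=
      sum_mul_sq_le_sq_mul_sq _ _ _
    _ ≤ Q * (L * L * Q) := by gcongr
    _ = (L * Q) ^ 2 := by ring

theorem sum_sub_mul_inclusionSum_compl [CommRing R] [LinearOrder R] [IsStrictOrderedRing R]
    {k : ℕ} (hkn : 2 * k ≤ Fintype.card α) {g : Finset α → R} {c : R}
    (hg : ∑ X ∈ powersetCard k univ, (g X - c) = 0) :
    ∑ X ∈ powersetCard k univ, (g X - c) * inclusionSum k (fun Y ↦ g Y - c) Xᶜ =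
      ∑ X ∈ powersetCard k univ, g X * inclusionSum k g Xᶜ -
        c * (Fintype.card α - k).choose k * ∑ X ∈ powersetCard k univ, g X := by
  have hsum : ∑ X ∈ powersetCard k univ, inclusionSum k (fun Y ↦ g Y - c) Xᶜ = 0 := by
    rw [sum_compl_powersetCard (by omega) (inclusionSum k fun Y ↦ g Y - c),
      show Fintype.card α - k = k + (Fintype.card α - 2 * k) by omega, sum_inclusionSum_eq_zero hg]
  have hcompl : ∀ X ∈ powersetCard k univ, inclusionSum k (fun Y ↦ g Y - c) Xᶜ =
      inclusionSum k g Xᶜ - (Fintype.card α - k).choose k * c := by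
    intro X hX
    rw [inclusionSum, sum_sub_distrib, sum_const, nsmul_eq_mul, card_powersetCard, card_compl,
      mem_powersetCard_univ.1 hX, inclusionSum]
  calc
    _ = ∑ X ∈ powersetCard k univ, g X * inclusionSum k (fun Y ↦ g Y - c) Xᶜ := by
      simp only [sub_mul, sum_sub_distrib, ← mul_sum]
      rw [hsum, mul_zero, sub_zero]
    _ = _ := by
      rw [sum_congr rfl fun X hX ↦ by rw [hcompl X hX]]
      simp only [mul_sub, sum_sub_distrib, ← sum_mul]
      ring

theorem le_sum_mul_inclusionSum_compl [Field R] [LinearOrder R] [IsStrictOrderedRing R]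
    {k : ℕ} (hk : 1 ≤ k) (hkn : 2 * k ≤ Fintype.card α) (g : Finset α → R) :
    (Fintype.card α - k).choose k / (Fintype.card α).choose k *
          (∑ X ∈ powersetCard k univ, g X) ^ 2 -
        (Fintype.card α - k - 1).choose (k - 1) * (∑ X ∈ powersetCard k univ, g X ^ 2 -
          (∑ X ∈ powersetCard k univ, g X) ^ 2 / (Fintype.card α).choose k) ≤
      ∑ X ∈ powersetCard k univ, g X * inclusionSum k g Xᶜ := by
  set N : R := ↑((Fintype.card α).choose k)
  set T := ∑ X ∈ powersetCard k univ, g X with hT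
  have hN : N ≠ 0 := Nat.cast_ne_zero.2 (Nat.choose_pos (by omega)).ne'
  have hcard : (#(powersetCard k (univ : Finset α)) : R) = N := by
    rw [card_powersetCard, card_univ]
  have hsum : ∑ X ∈ powersetCard k univ, (g X - T / N) = 0 := by
    rw [sum_sub_distrib, sum_const, nsmul_eq_mul, hcard, mul_div_cancel₀ _ hN, sub_self]
  have hsum_sq : ∑ X ∈ powersetCard k univ, (g X - T / N) ^ 2 =
      ∑ X ∈ powersetCard k univ, g X ^ 2 - T ^ 2 / N := by
    simp only [sub_sq, sum_add_distrib, sum_sub_distrib, ← sum_mul, ← mul_sum, sum_const,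
      nsmul_eq_mul, hcard, ← hT]
    field_simp
    ring
  have hbound := neg_le_of_abs_le (abs_sum_mul_inclusionSum_compl_le hk hkn hsum)
  rw [sum_sub_mul_inclusionSum_compl hkn hsum, hsum_sq] at hbound
  linear_combination hbound

theorem le_sum_card_filter_disjoint {k : ℕ} (hk : 1 ≤ k) (hkn : 2 * k ≤ Fintype.card α)
    {S : Finset (Finset α)} (hS : ∀ F ∈ S, #F = k) :
    ((Fintype.card α - k).choose k : ℝ) / (Fintype.card α).choose k * #S ^ 2 -
        (Fintype.card α - k - 1).choose (k - 1) * (#S - #S ^ 2 / (Fintype.card α).choose k) ≤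
      ∑ F ∈ S, #{G ∈ S | Disjoint F G} := by
  have hinter : powersetCard k univ ∩ S = S :=
    inter_eq_right.2 fun F hF ↦ mem_powersetCard_univ.2 (hS F hF)
  have hneighbors : ∀ F : Finset α,
      inclusionSum k (fun X ↦ if X ∈ S then (1 : ℝ) else 0) Fᶜ = #{G ∈ S | Disjoint F G} := by
    intro F
    rw [inclusionSum, sum_boole]
    congr 2
    ext G
    simp only [mem_filter, mem_powersetCard, subset_compl_iff_disjoint_left]
    grind
  have h := le_sum_mul_inclusionSum_compl hk hkn fun X : Finset α ↦ if X ∈ S then (1 : ℝ) else 0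
  simpa [hneighbors, hinter] using h

end

section

open Finset

theorem sum_card_filter_eq_two_mul_card {β : Type*} [DecidableEq β] {S : Finset β}
    {r : β → β → Prop} [DecidableRel r] (hsymm : ∀ x y, r x y → r y x)
    (hirrefl : ∀ x ∈ S, ¬ r x x) :
    ∑ x ∈ S, #{y ∈ S | r x y} =
      2 * #{P ∈ S.powersetCard 2 | ∀ x ∈ P, ∀ y ∈ P, x = y ∨ r x y} := by
  have hmaps : ∀ p ∈ S.sigma fun x ↦ {y ∈ S | r x y},
      {p.1, p.2} ∈ {P ∈ S.powersetCard 2 | ∀ x ∈ P, ∀ y ∈ P, x = y ∨ r x y} := by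
    rintro ⟨x, y⟩ h
    simp only [mem_sigma, mem_filter] at h
    obtain ⟨hx, hy, hxy⟩ := h
    have hne : x ≠ y := fun h ↦ hirrefl y hy (h ▸ hxy)
    simp [mem_powersetCard, insert_subset_iff, *]
  rw [← card_sigma, mul_comm, card_eq_sum_card_fiberwise hmaps]
  refine sum_const_nat fun P hP ↦ ?_
  simp only [mem_filter, mem_powersetCard] at hP
  obtain ⟨⟨hPS, hP2⟩, hr⟩ := hP
  obtain ⟨u, v, huv, rfl⟩ := card_eq_two.1 hP2
  have hu : u ∈ S := hPS (by simp)
  have hv : v ∈ S := hPS (by simp)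
  have hruv : r u v := (hr u (by simp) v (by simp)).resolve_left huv
  have hfiber : {p ∈ S.sigma fun x ↦ {y ∈ S | r x y} | ({p.1, p.2} : Finset β) = {u, v}} =
      {⟨u, v⟩, ⟨v, u⟩} := by
    ext ⟨x, y⟩
    rw [mem_filter, ← coe_inj, coe_pair, coe_pair, Set.pair_eq_pair_iff]
    simp only [mem_filter, mem_sigma, mem_insert, mem_singleton, Sigma.mk.injEq, heq_eq_eq]
    constructor
    · exact And.right
    · rintro (⟨rfl, rfl⟩ | ⟨rfl, rfl⟩)
      · simp [hu, hv, hruv]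
      · simp [hu, hv, hsymm _ _ hruv]
  rw [hfiber, card_pair (by simp [huv])]

theorem sum_card_filter_disjoint {n : ℕ} {S : Finset (Finset (Fin n))} (hS : ∅ ∉ S) :
    ∑ F ∈ S, #{G ∈ S | Disjoint F G} = 2 * kneserInducedEdges n S := by
  have hirrefl : ∀ F ∈ S, ¬ Disjoint F F := fun F hF h ↦ hS ((disjoint_self_iff_empty F).1 h ▸ hF)
  rw [sum_card_filter_eq_two_mul_card (fun _ _ h ↦ h.symm) hirrefl, kneserInducedEdges]
  simp only [disjoint_iff_inter_eq_empty]

theorem hoffman_bound_eq {n k : ℕ} (hk : 1 ≤ k) (hkn : k < n) (s : ℝ) :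
    ((n - k).choose k : ℝ) / n.choose k * s ^ 2 -
        (n - k - 1).choose (k - 1) * (s - s ^ 2 / n.choose k) =
      (n - k).choose k * n / (n.choose k * (n - k)) * (s * (s - (n - 1).choose (k - 1))) := by
  have hn : (n : ℝ) ≠ 0 := Nat.cast_ne_zero.2 (by omega)
  have hnk : (n : ℝ) - k ≠ 0 := sub_ne_zero.2 (by exact_mod_cast hkn.ne')
  have hN : (n.choose k : ℝ) ≠ 0 := Nat.cast_ne_zero.2 (Nat.choose_pos hkn.le).ne'
  have hC : ((n - 1).choose (k - 1) : ℝ) = n.choose k * k / n := by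
    rw [eq_div_iff hn, mul_comm]
    exact_mod_cast mul_choose_sub_one_sub_one n hk
  have hL : ((n - k - 1).choose (k - 1) : ℝ) = (n - k).choose k * k / (n - k) := by
    rw [eq_div_iff hnk, mul_comm, ← Nat.cast_sub hkn.le]
    exact_mod_cast mul_choose_sub_one_sub_one (n - k) hk
  rw [hC, hL]
  field_simp
  ring

theorem le_two_mul_kneserInducedEdges {n k : ℕ} (hk : 1 ≤ k) (hkn : 2 * k ≤ n)
    {S : Finset (Finset (Fin n))} (hS : ∀ F ∈ S, #F = k) :
    ((n - k).choose k * n / (n.choose k * (n - k)) * (#S * (#S - (n - 1).choose (k - 1))) : ℝ) ≤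
      2 * kneserInducedEdges n S := by
  have hempty : ∅ ∉ S := fun h ↦ by
    have := hS ∅ h
    rw [card_empty] at this
    omega
  have hcount := sum_card_filter_disjoint hempty
  have hhoffman := le_sum_card_filter_disjoint hk (by rwa [Fintype.card_fin]) hS
  rw [Fintype.card_fin, hoffman_bound_eq hk (by omega)] at hhoffman
  exact_mod_cast hcount ▸ hhoffman

end

theorem kneser_supersaturation_general {n k : ℕ} (hk : 1 ≤ k) (hkn : 2 * k ≤ n)
    {S : Finset (Finset (Fin n))} (hS : ∀ F ∈ S, F.card = k) :
    (1 - (n - 1).choose (k - 1) / S.card) *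
        ((n - k).choose k * n / (n.choose k * ((n : ℝ) - k))) * (S.card.choose 2 : ℝ) ≤
      kneserInducedEdges n S := by
  set R : ℝ := (n - k).choose k * n / (n.choose k * ((n : ℝ) - k))
  set C : ℝ := ↑((n - 1).choose (k - 1))
  have hnk : (0 : ℝ) ≤ n - k := sub_nonneg.2 (Nat.cast_le.2 (by omega))
  have hR : 0 ≤ R := by positivity
  obtain rfl | hne := S.eq_empty_or_nonempty
  · simp
  have hs : (1 : ℝ) ≤ S.card := by exact_mod_cast hne.card_pos
  have hchoose : (1 - C / S.card) * R * (S.card.choose 2 : ℝ) =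
      R * ((S.card - 1) * (S.card - C)) / 2 := by
    rw [Nat.cast_choose_two]
    field_simp
  rw [hchoose]
  obtain hsC | hCs := le_total (S.card : ℝ) C
  · have hnonpos : R * ((S.card - 1) * (S.card - C)) ≤ 0 :=
      mul_nonpos_of_nonneg_of_nonpos hR
        (mul_nonpos_of_nonneg_of_nonpos (sub_nonneg.2 hs) (sub_nonpos.2 hsC))
    exact (div_nonpos_of_nonpos_of_nonneg hnonpos zero_le_two).trans (Nat.cast_nonneg _)
  · have hmono : R * ((S.card - 1) * (S.card - C)) ≤ R * (S.card * (S.card - C)) := by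
      have := sub_nonneg.2 hCs
      gcongr
      linarith
    linarith [le_two_mul_kneserInducedEdges hk hkn hS]

theorem kneser_supersaturation (ε : ℝ) (hε : 0 < ε) (n k : ℕ)
    (hk : 2 ≤ k) (hkn : 2 * k ≤ n - 1)
    (S : Finset (Finset (Fin n))) (hS : ∀ e ∈ S, e.card = k)
    (hScard : (1 + ε) * ((n - 1).choose (k - 1) : ℝ) ≤ (S.card : ℝ)) :
    (1 - 1 / (1 + ε)) *
        (((n - k).choose k : ℝ) * (n : ℝ) / ((n.choose k : ℝ) * ((n : ℝ) - (k : ℝ)))) *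
        (S.card.choose 2 : ℝ) ≤
      (kneserInducedEdges n S : ℝ) := by
  have hnk : (0 : ℝ) ≤ n - k := sub_nonneg.2 (Nat.cast_le.2 (by omega))
  have hratio : ((n - 1).choose (k - 1) : ℝ) / S.card ≤ 1 / (1 + ε) := by
    refine div_le_of_le_mul₀ (by positivity) (by positivity) ?_
    rwa [one_div_mul_eq_div, le_div_iff₀' (by positivity)]
  exact le_trans (by gcongr) (kneser_supersaturation_general (by omega) (by omega) hS)
end

section
/- Let n ≥ t ≥ 1 be integers and let 𝓕 ⊆ S_n be a maximal t-intersecting family. Then there exists a subfamily 𝓕₀ ⊆ 𝓕 with |𝓕₀| ≤ binom(2n−2t+1, n−t) such that 𝓕 = {π ∈ S_n : |{i ∈ [n] : π(i) = σ(i)}| ≥ t for all σ ∈ 𝓕₀}. -/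
/-- The number of indices on which two permutations of `Fin n` agree. -/
def agreements {n : ℕ} (σ π : Equiv.Perm (Fin n)) : ℕ :=
  (Finset.univ.filter (fun i => σ i = π i)).card

/-- A family of permutations is `t`-intersecting if any two of its members agree
on at least `t` indices. -/
def IsTIntersecting {n : ℕ} (t : ℕ) (F : Finset (Equiv.Perm (Fin n))) : Prop :=
  ∀ σ ∈ F, ∀ π ∈ F, t ≤ agreements σ π

/-!
Permutations are encoded by their graphs, which are `n`-sets meeting in as many points as the
permutations agree. Put `s = t - 1` and `k = n - s`. An irredundant generating subfamily `F₀` comes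
with a witness for each member: an `n`-set meeting that member in at most `s` points and all other
members in more than `s`. Listing the pairs (member, witness) and then the pairs (witness, member)
gives `2 * #F₀` pairs `(A i, B i)` with `#(A i ∩ B i) ≤ s` and `#(A i ∩ B j) > s` for `i < j`, so
Füredi's threshold version of Bollobás's set-pair theorem yields
`2 * #F₀ ≤ (2 * k).choose k = 2 * (2 * k - 1).choose (k - 1)`.

For the set-pair theorem, with `#(A i) = k + s` and `#(B i) = l + s`, attach to the points generic
vectors of `C × D`, where `dim C = k + l` and `dim D = s`, and send the vectors of `A i` to
`C × D × 0` and those of `B j` to `C × 0 × D`. Their determinant in `C × D × D` vanishes if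
`A i` and `B j` share more than `s` points: some nontrivial combination of the common vectors has no
`D`-component, hence has the same image under both embeddings. If they share at most `s` points it
is nonzero generically. As an alternating form in the vectors of `A i`, it vanishes whenever some
`D`-coordinate is zero on all of them; such a form is determined by its contraction with a basis of
`D`, a `k`-form on `C`. There are at most `(k + l).choose k` independent ones.
-/

open Finset Module

section Combinatorics

lemma exists_perm_comp_eq_sumMap {κ γ δ : Type*} [Finite δ] {v : κ ⊕ δ → γ ⊕ δ}
    (hv : Function.Injective v) (hδ : ∀ y, ∃ j, v j = Sum.inr y) :
    ∃ (σ : Equiv.Perm (κ ⊕ δ)) (c : κ → γ), v ∘ σ = Sum.map c id := by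
  choose j hj using hδ
  have hj_inj : Function.Injective j := fun y y' h ↦ Sum.inr_injective (by rw [← hj, h, hj])
  obtain ⟨σ, hσ⟩ := Equiv.Perm.exists_extending_pair Sum.inr j Sum.inr_injective hj_inj
  have hvσ (y : δ) : v (σ (Sum.inr y)) = Sum.inr y := (congrArg v (hσ y)).trans (hj y)
  have hleft (x : κ) : ∃ c, v (σ (Sum.inl x)) = Sum.inl c := by
    rcases hx : v (σ (Sum.inl x)) with c | y
    · exact ⟨c, rfl⟩
    · cases σ.injective (hv (hx.trans (hvσ y).symm))
  choose c hc using hleft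
  exact ⟨σ, c, funext (Sum.rec hc hvσ)⟩

lemma exists_perms_agreeing_on_inter {α κ₁ κ₂ δ : Type*} [DecidableEq α] [Fintype δ]
    {A B : Finset α} (hAB : #(A ∩ B) ≤ Fintype.card δ) (a : κ₁ ⊕ δ ≃ A) (b : κ₂ ⊕ δ ≃ B) :
    ∃ (σ : Equiv.Perm (κ₁ ⊕ δ)) (τ : Equiv.Perm (κ₂ ⊕ δ)), ∀ x (hxA : x ∈ A) (hxB : x ∈ B),
      ∃ y, σ (a.symm ⟨x, hxA⟩) = Sum.inr y ∧ τ (b.symm ⟨x, hxB⟩) = Sum.inr y := by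
  obtain ⟨e⟩ : Nonempty (↥(A ∩ B) ↪ δ) := Function.Embedding.nonempty_of_card_le (by simpa)
  let toA := Subtype.impEmbedding (· ∈ A ∩ B) (· ∈ A) fun _ ↦ mem_of_mem_inter_left
  let toB := Subtype.impEmbedding (· ∈ A ∩ B) (· ∈ B) fun _ ↦ mem_of_mem_inter_right
  obtain ⟨σ, hσ⟩ := Equiv.Perm.exists_extending_pair (a.symm ∘ toA) (Sum.inr ∘ e)
    (a.symm.injective.comp toA.injective) (Sum.inr_injective.comp e.injective)
  obtain ⟨τ, hτ⟩ := Equiv.Perm.exists_extending_pair (b.symm ∘ toB) (Sum.inr ∘ e)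
    (b.symm.injective.comp toB.injective) (Sum.inr_injective.comp e.injective)
  exact ⟨σ, τ, fun x hxA hxB ↦
    ⟨e ⟨x, mem_inter.2 ⟨hxA, hxB⟩⟩, hσ ⟨x, mem_inter.2 ⟨hxA, hxB⟩⟩, hτ ⟨x, mem_inter.2 ⟨hxA, hxB⟩⟩⟩⟩

lemma exists_irredundant_subset {X Y : Type*} (r : X → Y → Prop) (F : Finset Y) :
    ∃ F₀ ⊆ F, (∀ x, (∀ y ∈ F₀, r x y) ↔ ∀ y ∈ F, r x y) ∧
      ∀ y ∈ F₀, ∃ x, ¬ r x y ∧ ∀ y' ∈ F₀, y' ≠ y → r x y' := by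
  classical
  obtain ⟨F₀, hF₀, hmin⟩ := exists_minimal_le_of_wellFoundedLT
    (fun G : Finset Y ↦ ∀ x, (∀ y ∈ G, r x y) ↔ ∀ y ∈ F, r x y) F fun _ ↦ Iff.rfl
  refine ⟨F₀, hF₀, hmin.prop, fun y hy ↦ ?_⟩
  by_contra! hred
  have herase : ∀ x, (∀ y' ∈ F₀.erase y, r x y') ↔ ∀ y' ∈ F, r x y' := fun x ↦ by
    rw [← hmin.prop x]
    refine ⟨fun h y' hy' ↦ ?_, fun h y' hy' ↦ h y' (mem_of_mem_erase hy')⟩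
    by_cases hxy : r x y
    · by_cases hne : y' = y
      · exact hne ▸ hxy
      · exact h y' (mem_erase.2 ⟨hne, hy'⟩)
    · obtain ⟨z, hz, hzy, hxz⟩ := hred x hxy
      exact absurd (h z (mem_erase.2 ⟨hzy, hz⟩)) hxz
  exact hmin.not_prop_of_lt (erase_ssubset hy) herase

lemma mem_iff_of_maximal_pairwise {X : Type*} {r : X → X → Prop} (hrefl : ∀ x, r x x)
    (hsymm : ∀ x y, r x y → r y x) {F : Finset X} (hF : ∀ x ∈ F, ∀ y ∈ F, r x y)
    (hmax : ∀ G : Finset X, (∀ x ∈ G, ∀ y ∈ G, r x y) → F ⊆ G → F = G) (x : X) :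
    x ∈ F ↔ ∀ y ∈ F, r x y := by
  classical
  refine ⟨hF x, fun hx ↦ ?_⟩
  rw [hmax (insert x F) ?_ (subset_insert x F)]
  · exact mem_insert_self x F
  · simp only [forall_mem_insert]
    exact ⟨⟨hrefl x, hx⟩, fun y hy ↦ ⟨hsymm x y (hx y hy), hF y hy⟩⟩

end Combinatorics

section LinearAlgebra

lemma linearIndependent_of_triangular {R V T : Type*} [CommRing R] [IsDomain R] [AddCommGroup V]
    [Module R V] [Finite T] [LinearOrder T] (v : T → V) (φ : T → Dual R V)
    (hdiag : ∀ i, φ i (v i) ≠ 0) (htri : ∀ i j, i < j → φ i (v j) = 0) :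
    LinearIndependent R v := by
  have := Fintype.ofFinite T
  have hupper : (Matrix.of fun j i ↦ φ i (v j)).IsUpperTriangular := fun j i hij ↦ htri i j hij
  refine .of_comp (LinearMap.pi φ) (Matrix.linearIndependent_rows_of_det_ne_zero
    (A := Matrix.of fun j i ↦ φ i (v j)) ?_)
  rw [Matrix.det_of_isUpperTriangular hupper]
  exact prod_ne_zero_iff.2 fun i _ ↦ hdiag i

/-- The alternating map `u ↦ f (u, w)`, with the arguments indexed by the right summand fixed. -/
def fixInr {R M N ι κ : Type*} [CommRing R] [AddCommGroup M] [Module R M] [AddCommGroup N]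
    [Module R N] (f : M [⋀^ι ⊕ κ]→ₗ[R] N) (w : κ → M) : M [⋀^ι]→ₗ[R] N where
  toFun u := f (Sum.elim u w)
  map_update_add' := by
    intro _ u i x y
    classical
    simp only [← Sum.update_elim_inl, f.map_update_add]
  map_update_smul' := by
    intro _ u i c x
    classical
    simp only [← Sum.update_elim_inl, f.map_update_smul]
  map_eq_zero_of_eq' u i j hu hij :=
    f.map_eq_zero_of_eq _ (i := Sum.inl i) (j := Sum.inl j) hu (Sum.inl_injective.ne hij)

section Dimension

/-- Alternating forms are the dual of the exterior power in degree `Fintype.card κ`, through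
the arbitrary enumeration `Fintype.equivFin κ` of the arguments. -/
noncomputable def alternatingFormEquivDual {R M κ : Type*} [CommRing R] [AddCommGroup M]
    [Module R M] [Fintype κ] : (M [⋀^κ]→ₗ[R] R) ≃ₗ[R] Dual R (⋀[R]^(Fintype.card κ) M) :=
  (AlternatingMap.domDomCongrₗ R (Fintype.equivFin κ)).trans
    exteriorPower.alternatingMapLinearEquiv

variable {K M κ : Type*} [Field K] [AddCommGroup M] [Module K M] [FiniteDimensional K M]

instance finiteDimensional_alternatingForm [Finite κ] : FiniteDimensional K (M [⋀^κ]→ₗ[K] K) :=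
  have := Fintype.ofFinite κ
  Module.Finite.equiv alternatingFormEquivDual.symm

lemma finrank_alternatingForm [Fintype κ] :
    finrank K (M [⋀^κ]→ₗ[K] K) = (finrank K M).choose (Fintype.card κ) := by
  rw [alternatingFormEquivDual.finrank_eq, Subspace.dual_finrank_eq, exteriorPower.finrank_eq]

end Dimension

section Restriction

variable {R C D γ κ δ ι : Type*} [CommRing R] [AddCommGroup C] [Module R C] [AddCommGroup D]
  [Module R D]

/-- The alternating forms on `C × D` involving every `b`-coordinate of `D`: they vanish as soon as
some `b`-coordinate is zero on all arguments. -/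
def formsInvolving (C ι : Type*) [AddCommGroup C] [Module R C] (b : Basis δ R D) :
    Submodule R ((C × D) [⋀^ι]→ₗ[R] R) where
  carrier := {Φ | ∀ u y, (∀ j, b.coord y (u j).2 = 0) → Φ u = 0}
  zero_mem' _ _ _ := rfl
  add_mem' hΦ hΨ u y hu := by simp [hΦ u y hu, hΨ u y hu]
  smul_mem' c Φ hΦ u y hu := by simp [hΦ u y hu]

/-- The contraction of a form on `C × D` with the basis `b` of `D` in its last arguments, viewed as
a form on `C`. -/
noncomputable def contractBasis (b : Basis δ R D) :
    ((C × D) [⋀^κ ⊕ δ]→ₗ[R] R) →ₗ[R] C [⋀^κ]→ₗ[R] R where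
  toFun Φ := (fixInr Φ (LinearMap.inr R C D ∘ b)).compLinearMap (LinearMap.inl R C D)
  map_add' _ _ := rfl
  map_smul' _ _ := rfl

lemma eq_zero_of_contractBasis_eq_zero [Finite κ] [Finite δ] (c : Basis γ R C) (b : Basis δ R D)
    {Φ : (C × D) [⋀^κ ⊕ δ]→ₗ[R] R} (hΦ : Φ ∈ formsInvolving C (κ ⊕ δ) b)
    (h : contractBasis b Φ = 0) : Φ = 0 := by
  classical
  have := Fintype.ofFinite κ
  have := Fintype.ofFinite δ
  refine (c.prod b).ext_alternating fun v hv ↦ ?_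
  by_cases hδ : ∀ y, ∃ j, v j = Sum.inr y
  · obtain ⟨σ, d, hσ⟩ := exists_perm_comp_eq_sumMap hv hδ
    have hvσ : (c.prod b ∘ v) ∘ σ = Sum.elim (LinearMap.inl R C D ∘ c ∘ d)
        (LinearMap.inr R C D ∘ b) := by
      rw [Function.comp_assoc, hσ]
      ext (x | y) <;> simp
    have hzero : Φ ((c.prod b ∘ v) ∘ σ) = 0 := hvσ ▸ DFunLike.congr_fun h (c ∘ d)
    rw [Φ.map_perm, smul_eq_zero_iff_eq] at hzero
    exact hzero
  · push Not at hδ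
    obtain ⟨y, hy⟩ := hδ
    refine hΦ _ y fun j ↦ ?_
    rcases hj : v j with x | y'
    · simp
    · have : y' ≠ y := fun h ↦ hy j (h ▸ hj)
      simp [this]

lemma card_le_choose_of_mem_formsInvolving {K C D T : Type*} [Field K] [AddCommGroup C]
    [Module K C] [FiniteDimensional K C] [AddCommGroup D] [Module K D] [Fintype κ] [Finite δ]
    [Fintype T] (b : Basis δ K D) {Φ : T → (C × D) [⋀^κ ⊕ δ]→ₗ[K] K} (hΦ : LinearIndependent K Φ)
    (hmem : ∀ i, Φ i ∈ formsInvolving C (κ ⊕ δ) b) :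
    Fintype.card T ≤ (finrank K C).choose (Fintype.card κ) := by
  have hspan : Submodule.span K (Set.range Φ) ≤ formsInvolving C (κ ⊕ δ) b :=
    Submodule.span_le.2 (Set.range_subset_iff.2 hmem)
  have hcontract : LinearIndependent K (contractBasis b ∘ Φ) :=
    hΦ.map (Submodule.disjoint_def.2 fun Ψ hΨ hker ↦
      eq_zero_of_contractBasis_eq_zero (finBasis K C) b (hspan hΨ) hker)
  exact finrank_alternatingForm (K := K) (M := C) (κ := κ) ▸ hcontract.fintype_card_le_finrank

end Restriction

end LinearAlgebra

section Doubling

/-- The embedding of `C × D` into `C × D × D` that uses the first copy of `D`. -/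
def leftCopy (R C D : Type*) [CommRing R] [AddCommGroup C] [Module R C] [AddCommGroup D]
    [Module R D] : C × D →ₗ[R] C × D × D :=
  LinearMap.id.prodMap (LinearMap.inl R D D)

/-- The embedding of `C × D` into `C × D × D` that uses the second copy of `D`. -/
def rightCopy (R C D : Type*) [CommRing R] [AddCommGroup C] [Module R C] [AddCommGroup D]
    [Module R D] : C × D →ₗ[R] C × D × D :=
  LinearMap.id.prodMap (LinearMap.inr R D D)

lemma alternatingMap_leftCopy_rightCopy_eq_zero_of_finrank_lt_card {K C D N ι κ η : Type*}
    [Field K] [AddCommGroup C] [Module K C] [AddCommGroup D] [Module K D] [FiniteDimensional K D]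
    [AddCommGroup N] [Module K N] [Fintype η] (f : (C × D × D) [⋀^ι ⊕ κ]→ₗ[K] N)
    {u : ι → C × D} {w : κ → C × D} (p : η ↪ ι) (q : η → κ) (huw : ∀ e, u (p e) = w (q e))
    (hη : finrank K D < Fintype.card η) :
    f (Sum.elim (leftCopy K C D ∘ u) (rightCopy K C D ∘ w)) = 0 := by
  refine f.map_linearDependent _ fun hli ↦ ?_
  obtain ⟨hleft, -, hdisj⟩ := linearIndependent_sum.1 hli
  simp only [Sum.elim_comp_inl, Sum.elim_comp_inr] at hleft hdisj
  obtain ⟨g, hg, e, he⟩ : ∃ g : η → K, ∑ e, g e • (u (p e)).2 = 0 ∧ ∃ e, g e ≠ 0 :=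
    Fintype.not_linearIndependent_iff.1 fun h ↦ hη.not_ge h.fintype_card_le_finrank
  set x : C × D := ∑ e, g e • u (p e)
  have hx : leftCopy K C D x = rightCopy K C D x := by
    have : x.2 = 0 := by simpa [x, Prod.snd_sum] using hg
    simp [leftCopy, rightCopy, this]
  have hx_left : leftCopy K C D x ∈ Submodule.span K (Set.range (leftCopy K C D ∘ u)) := by
    rw [map_sum]
    exact sum_mem fun e _ ↦ by
      rw [map_smul]
      exact Submodule.smul_mem _ _ (Submodule.subset_span ⟨p e, rfl⟩)
  have hx_right : leftCopy K C D x ∈ Submodule.span K (Set.range (rightCopy K C D ∘ w)) := by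
    rw [hx, map_sum]
    exact sum_mem fun e _ ↦ by
      rw [map_smul, huw]
      exact Submodule.smul_mem _ _ (Submodule.subset_span ⟨q e, rfl⟩)
  have hzero : ∑ e, g e • (leftCopy K C D ∘ u ∘ p) e = 0 := by
    simpa [x] using Submodule.disjoint_def.1 hdisj _ hx_left hx_right
  exact he (Fintype.linearIndependent_iff.1 (hleft.comp p p.injective) g hzero e)

variable {R S α κ₁ κ₂ δ : Type*} [CommRing R] [CommRing S]

/-- The standard basis of `C × D × D` for coordinate spaces `C` and `D`, indexed so that the left
summand accounts for the first copy of `D` and the right summand for the second. -/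
noncomputable def doubledBasis (R κ₁ κ₂ δ : Type*) [CommRing R] [Finite κ₁] [Finite κ₂]
    [Finite δ] :
    Basis ((κ₁ ⊕ δ) ⊕ (κ₂ ⊕ δ)) R ((κ₁ ⊕ κ₂ → R) × (δ → R) × (δ → R)) :=
  ((Pi.basisFun R (κ₁ ⊕ κ₂)).prod ((Pi.basisFun R δ).prod (Pi.basisFun R δ))).reindex
    (Equiv.sumSumSumComm κ₁ δ κ₂ δ).symm

variable [Fintype κ₁] [Fintype κ₂] [Fintype δ] [DecidableEq κ₁] [DecidableEq κ₂] [DecidableEq δ]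

/-- The volume form of Füredi's argument: the determinant of the vectors `u` in the first embedding
of `C × D` together with the vectors `w` in the second, as an alternating form in `u`. -/
noncomputable def pairForm (w : κ₂ ⊕ δ → (κ₁ ⊕ κ₂ → R) × (δ → R)) :
    ((κ₁ ⊕ κ₂ → R) × (δ → R)) [⋀^κ₁ ⊕ δ]→ₗ[R] R :=
  (fixInr (doubledBasis R κ₁ κ₂ δ).det (rightCopy R _ _ ∘ w)).compLinearMap (leftCopy R _ _)

lemma pairForm_apply (w : κ₂ ⊕ δ → (κ₁ ⊕ κ₂ → R) × (δ → R))
    (u : κ₁ ⊕ δ → (κ₁ ⊕ κ₂ → R) × (δ → R)) :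
    pairForm w u = (doubledBasis R κ₁ κ₂ δ).det
      (Sum.elim (leftCopy R _ _ ∘ u) (rightCopy R _ _ ∘ w)) := rfl

lemma pairForm_mem_formsInvolving (w : κ₂ ⊕ δ → (κ₁ ⊕ κ₂ → R) × (δ → R)) :
    pairForm w ∈ formsInvolving (κ₁ ⊕ κ₂ → R) (κ₁ ⊕ δ) (Pi.basisFun R δ) := by
  intro u y hu
  rw [pairForm_apply, Basis.det_apply]
  refine Matrix.det_eq_zero_of_row_eq_zero (Sum.inl (Sum.inr y)) fun j ↦ ?_
  rcases j with j | j
  · simpa [Basis.toMatrix_apply, doubledBasis, leftCopy] using hu j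
  · simp [Basis.toMatrix_apply, doubledBasis, rightCopy]

lemma map_pairForm (f : R →+* S) (w : κ₂ ⊕ δ → (κ₁ ⊕ κ₂ → R) × (δ → R))
    (u : κ₁ ⊕ δ → (κ₁ ⊕ κ₂ → R) × (δ → R)) :
    f (pairForm w u) = pairForm (Prod.map (f ∘ ·) (f ∘ ·) ∘ w) (Prod.map (f ∘ ·) (f ∘ ·) ∘ u) := by
  simp only [pairForm_apply, Basis.det_apply, RingHom.map_det]
  congr 1
  ext ((i | i) | (i | i)) (j | j) <;>
    simp [Basis.toMatrix_apply, doubledBasis, leftCopy, rightCopy]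

lemma pairForm_eq_zero_of_lt_card_inter {K : Type*} [Field K] [DecidableEq α] {A B : Finset α}
    (hAB : Fintype.card δ < #(A ∩ B)) (a : κ₁ ⊕ δ ≃ A) (b : κ₂ ⊕ δ ≃ B)
    (z : α → (κ₁ ⊕ κ₂ → K) × (δ → K)) : pairForm (fun j ↦ z (b j)) (fun i ↦ z (a i)) = 0 := by
  rw [pairForm_apply]
  exact alternatingMap_leftCopy_rightCopy_eq_zero_of_finrank_lt_card (η := ↥(A ∩ B)) _
    ((Subtype.impEmbedding _ _ fun _ ↦ mem_of_mem_inter_left).trans a.symm.toEmbedding)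
    (fun x ↦ b.symm ⟨x, mem_of_mem_inter_right x.2⟩) (fun x ↦ by
      simp only [Function.Embedding.trans_apply, Equiv.coe_toEmbedding, Equiv.apply_symm_apply]
      rfl)
    (by simpa using hAB)

lemma exists_pairForm_ne_zero [DecidableEq α] [Nontrivial R] {A B : Finset α}
    (hAB : #(A ∩ B) ≤ Fintype.card δ) (a : κ₁ ⊕ δ ≃ A) (b : κ₂ ⊕ δ ≃ B) :
    ∃ z : α → (κ₁ ⊕ κ₂ → R) × (δ → R), pairForm (fun j ↦ z (b j)) (fun i ↦ z (a i)) ≠ 0 := by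
  obtain ⟨σ, τ, hστ⟩ := exists_perms_agreeing_on_inter hAB a b
  let E := (Pi.basisFun R (κ₁ ⊕ κ₂)).prod (Pi.basisFun R δ)
  let z (x : α) : (κ₁ ⊕ κ₂ → R) × (δ → R) :=
    if hA : x ∈ A then E ((σ (a.symm ⟨x, hA⟩)).map Sum.inl id)
    else if hB : x ∈ B then E ((τ (b.symm ⟨x, hB⟩)).map Sum.inr id) else 0
  have hzA (x : A) : z x = E ((σ (a.symm x)).map Sum.inl id) := dif_pos x.2
  have hzB (x : B) : z x = E ((τ (b.symm x)).map Sum.inr id) := by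
    by_cases hA : (x : α) ∈ A
    · obtain ⟨y, hσ, hτ⟩ := hστ x hA x.2
      rw [hzA ⟨x, hA⟩, hσ, hτ]
      rfl
    · exact (dif_neg hA).trans (dif_pos x.2)
  have hfamily : Sum.elim (leftCopy R _ _ ∘ fun i ↦ z (a i)) (rightCopy R _ _ ∘ fun j ↦ z (b j)) =
      (doubledBasis R κ₁ κ₂ δ).reindex (σ.sumCongr τ).symm := by
    ext1 (i | j)
    · rcases h : σ i with c | y <;> simp [E, hzA, h, doubledBasis, leftCopy]
    · rcases h : τ j with c | y <;> simp [E, hzB, h, doubledBasis, rightCopy]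
  refine ⟨z, ?_⟩
  rw [pairForm_apply, hfamily]
  exact (Basis.isUnit_det _ _).ne_zero

lemma exists_forall_pairForm_ne_zero {K T : Type*} [Field K] [Infinite K] [Finite T]
    (a : T → κ₁ ⊕ δ → α) (b : T → κ₂ ⊕ δ → α)
    (h : ∀ i, ∃ z : α → (κ₁ ⊕ κ₂ → K) × (δ → K), pairForm (z ∘ b i) (z ∘ a i) ≠ 0) :
    ∃ z : α → (κ₁ ⊕ κ₂ → K) × (δ → K), ∀ i, pairForm (z ∘ b i) (z ∘ a i) ≠ 0 := by
  have := Fintype.ofFinite T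
  let Z (x : α) : (κ₁ ⊕ κ₂ → MvPolynomial (α × ((κ₁ ⊕ κ₂) ⊕ δ)) K) ×
      (δ → MvPolynomial (α × ((κ₁ ⊕ κ₂) ⊕ δ)) K) :=
    (fun c ↦ .X (x, .inl c), fun d ↦ .X (x, .inr d))
  let P (i : T) : MvPolynomial (α × ((κ₁ ⊕ κ₂) ⊕ δ)) K := pairForm (Z ∘ b i) (Z ∘ a i)
  let point (v : α × ((κ₁ ⊕ κ₂) ⊕ δ) → K) (x : α) : (κ₁ ⊕ κ₂ → K) × (δ → K) :=
    (fun c ↦ v (x, .inl c), fun d ↦ v (x, .inr d))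
  have hspecialize (v : α × ((κ₁ ⊕ κ₂) ⊕ δ) → K) (i : T) :
      MvPolynomial.eval v (P i) = pairForm (point v ∘ b i) (point v ∘ a i) := by
    have hpoint : Prod.map (MvPolynomial.eval v ∘ ·) (MvPolynomial.eval v ∘ ·) ∘ Z = point v := by
      ext <;> simp [Z, point]
    rw [map_pairForm, ← Function.comp_assoc, ← Function.comp_assoc, hpoint]
  have hP : ∏ i, P i ≠ 0 := prod_ne_zero_iff.2 fun i _ hi ↦ by
    obtain ⟨z, hz⟩ := h i
    refine hz ?_
    simpa [hi, point] using (hspecialize (fun p ↦ Sum.elim (z p.1).1 (z p.1).2 p.2) i).symm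
  obtain ⟨v, hv⟩ : ∃ v, MvPolynomial.eval v (∏ i, P i) ≠ 0 := by
    by_contra! hall
    exact hP (MvPolynomial.funext fun v ↦ by rw [hall v, map_zero])
  rw [map_prod, prod_ne_zero_iff] at hv
  exact ⟨point v, fun i ↦ hspecialize v i ▸ hv i (mem_univ i)⟩

end Doubling

section SetPairs

variable {α T : Type*} [DecidableEq α] [Fintype T] {k l s : ℕ}

theorem card_le_choose_of_skew_card_inter [LinearOrder T] {A B : T → Finset α}
    (hA : ∀ i, #(A i) = k + s) (hB : ∀ i, #(B i) = l + s) (hdiag : ∀ i, #(A i ∩ B i) ≤ s)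
    (hskew : ∀ i j, i < j → s < #(A i ∩ B j)) : Fintype.card T ≤ (k + l).choose k := by
  let a (i : T) : Fin k ⊕ Fin s ≃ A i := Fintype.equivOfCardEq (by simp [hA])
  let b (i : T) : Fin l ⊕ Fin s ≃ B i := Fintype.equivOfCardEq (by simp [hB])
  obtain ⟨z, hz⟩ := exists_forall_pairForm_ne_zero (K := ℚ) (fun i j ↦ (a i j : α))
    (fun i j ↦ (b i j : α)) fun i ↦ exists_pairForm_ne_zero (by simpa using hdiag i) (a i) (b i)
  let Φ (i : T) := pairForm fun j ↦ z (b i j)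
  let evalAt (i : T) : Dual ℚ (((Fin k ⊕ Fin l → ℚ) × (Fin s → ℚ)) [⋀^Fin k ⊕ Fin s]→ₗ[ℚ] ℚ) :=
    { toFun := fun Ψ ↦ Ψ fun j ↦ z (a i j)
      map_add' := fun _ _ ↦ rfl
      map_smul' := fun _ _ ↦ rfl }
  have hΦ : LinearIndependent ℚ Φ := linearIndependent_of_triangular Φ evalAt hz fun i j hij ↦
    pairForm_eq_zero_of_lt_card_inter (by simpa using hskew i j hij) (a i) (b j) z
  simpa using card_le_choose_of_mem_formsInvolving (Pi.basisFun ℚ (Fin s)) hΦ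
    fun i ↦ pairForm_mem_formsInvolving _

theorem two_mul_card_le_choose_of_card_inter {A B : T → Finset α} (hA : ∀ i, #(A i) = k + s)
    (hB : ∀ i, #(B i) = k + s) (hdiag : ∀ i, #(A i ∩ B i) ≤ s) (hAA : ∀ i j, s < #(A i ∩ A j))
    (hAB : ∀ i j, i ≠ j → s < #(A i ∩ B j)) : 2 * Fintype.card T ≤ (2 * k).choose k := by
  let _ : LinearOrder T := LinearOrder.lift' (Fintype.equivFin T) (Fintype.equivFin T).injective
  have hcard := card_le_choose_of_skew_card_inter (T := T ⊕ₗ T) (k := k) (l := k) (s := s)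
    (A := Sum.elim A B ∘ ofLex) (B := Sum.elim B A ∘ ofLex) (Sum.rec hA hB) (Sum.rec hB hA)
    (Sum.rec hdiag fun i ↦ inter_comm (A i) (B i) ▸ hdiag i) ?_
  · simpa [two_mul] using hcard
  rintro (i | i) (j | j) hij
  · exact hAB i j (Sum.Lex.inl_lt_inl_iff.1 hij).ne
  · exact hAA i j
  · exact absurd hij Sum.Lex.not_inr_lt_inl
  · exact inter_comm (A j) (B i) ▸ hAB j i (Sum.Lex.inr_lt_inr_iff.1 hij).ne'

end SetPairs

section GeneratingSubfamily

variable {X α : Type*} [DecidableEq α]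

lemma choose_two_mul_succ (k : ℕ) :
    (2 * (k + 1)).choose (k + 1) = 2 * (2 * k + 1).choose k := by
  rw [mul_add_one, Nat.choose_succ_succ, Nat.choose_symm_half, ← two_mul]

lemma exists_small_subset_forall_lt_card_inter_iff {S : X → Finset α} {k s : ℕ}
    (hS : ∀ x, #(S x) = k + 1 + s) {F : Finset X} (hF : ∀ x ∈ F, ∀ y ∈ F, s < #(S x ∩ S y)) :
    ∃ F₀ ⊆ F, #F₀ ≤ (2 * k + 1).choose k ∧
      ∀ x, (∀ y ∈ F₀, s < #(S x ∩ S y)) ↔ ∀ y ∈ F, s < #(S x ∩ S y) := by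
  obtain ⟨F₀, hF₀, hgen, hirr⟩ := exists_irredundant_subset (fun x y ↦ s < #(S x ∩ S y)) F
  refine ⟨F₀, hF₀, ?_, hgen⟩
  choose w hw hw_ne using fun y : F₀ ↦ hirr y y.2
  have hcard := two_mul_card_le_choose_of_card_inter (A := fun y : F₀ ↦ S y) (B := fun y ↦ S (w y))
    (fun _ ↦ hS _) (fun _ ↦ hS _) (fun y ↦ inter_comm (S y) _ ▸ not_lt.1 (hw y))
    (fun x y ↦ hF x (hF₀ x.2) y (hF₀ y.2))
    (fun x y hxy ↦ inter_comm (S x) _ ▸ hw_ne y x x.2 (Subtype.coe_injective.ne hxy))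
  rw [Fintype.card_coe, choose_two_mul_succ] at hcard
  omega

theorem maximal_t_intersecting_family_has_small_generating_set_general {S : X → Finset α} {n t : ℕ}
    (ht : 1 ≤ t) (htn : t ≤ n) (hS : ∀ x, #(S x) = n) {F : Finset X}
    (hF : ∀ x ∈ F, ∀ y ∈ F, t ≤ #(S x ∩ S y))
    (hmax : ∀ G : Finset X, (∀ x ∈ G, ∀ y ∈ G, t ≤ #(S x ∩ S y)) → F ⊆ G → F = G) :
    ∃ F₀ ⊆ F, #F₀ ≤ (2 * n - 2 * t + 1).choose (n - t) ∧
      ∀ x, x ∈ F ↔ ∀ y ∈ F₀, t ≤ #(S x ∩ S y) := by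
  obtain ⟨s, rfl⟩ := Nat.exists_eq_add_of_le' ht
  obtain ⟨k, rfl⟩ := Nat.exists_eq_add_of_le' htn
  obtain ⟨F₀, hF₀, hcard, hgen⟩ := exists_small_subset_forall_lt_card_inter_iff (k := k) (s := s)
    (fun x ↦ (hS x).trans (by omega)) hF
  refine ⟨F₀, hF₀, ?_, fun x ↦ ?_⟩
  · rwa [Nat.add_sub_cancel, ← Nat.mul_sub, Nat.add_sub_cancel]
  · exact (mem_iff_of_maximal_pairwise (fun x ↦ by simp [hS])
      (fun x y ↦ by rw [inter_comm]; exact id) hF hmax x).trans (hgen x).symm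

end GeneratingSubfamily

section Graph

variable {ι β : Type*} [Fintype ι] [DecidableEq ι] [DecidableEq β]

/-- The graph of a function, as a finite set of pairs. -/
def graph (f : ι → β) : Finset (ι × β) :=
  univ.image fun i ↦ (i, f i)

lemma card_graph_inter_graph (f g : ι → β) : #(graph f ∩ graph g) = #{i | f i = g i} := by
  have hinter : graph f ∩ graph g = ({i | f i = g i} : Finset ι).image fun i ↦ (i, f i) := by
    ext ⟨i, b⟩
    simp only [graph, mem_inter, mem_image, mem_filter, mem_univ, true_and, Prod.mk.injEq]
    grind
  rw [hinter, card_image_of_injective _ fun _ _ h ↦ congrArg Prod.fst h]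

lemma card_graph (f : ι → β) : #(graph f) = Fintype.card ι := by
  simpa using card_graph_inter_graph f f

end Graph

theorem maximal_t_intersecting_family_has_small_generating_set
    (n t : ℕ) (ht : 1 ≤ t) (htn : t ≤ n)
    (F : Finset (Equiv.Perm (Fin n))) (hF : IsTIntersecting t F)
    (hmax : ∀ G : Finset (Equiv.Perm (Fin n)), IsTIntersecting t G → F ⊆ G → F = G) :
    ∃ F₀ ⊆ F, F₀.card ≤ (2 * n - 2 * t + 1).choose (n - t) ∧
      ∀ π : Equiv.Perm (Fin n), π ∈ F ↔ ∀ σ ∈ F₀, t ≤ agreements π σ := by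
  simp only [IsTIntersecting, agreements, ← card_graph_inter_graph] at hF hmax ⊢
  exact maximal_t_intersecting_family_has_small_generating_set_general
    (S := fun σ : Equiv.Perm (Fin n) ↦ graph σ) ht htn
    (fun σ ↦ (card_graph σ).trans (Fintype.card_fin n)) hF hmax
end
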